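/- arXiv:1512.07518 — 7 statements merged into one kernel-verified Lean document; each statement's English description precedes it below -/
import Mathlib

section
/- For every s ∈ ℕ₀, every sequence (a_j)_{0 ≤ j ≤ 2^s} of complex numbers, and every j₀ ∈ {0, 1, …, 2^s}, one has max_{0 ≤ j ≤ 2^s} |a_j| ≤ |a_{j₀}| + √2 · Σ_{i=0}^{s} ( Σ_{j=0}^{2^{s−i}−1} |a_{(j+1)2^i} − a_{j2^i}|² )^{1/2}. -/
/-!
By the triangle inequality it suffices to bound the distance between `a m` and `a n` when
`m < n ≤ 2 ^ (s + 1)`. Rounding `m` up and `n` down to even numbers `m' ≤ n'` costs at most one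
step of `a` each, and the two steps are different. By Cauchy–Schwarz their total length is at most
`√2` times the `ℓ²` norm of all steps of `a`, which is the term `i = 0`. The distance between
`a m'` and `a n'` is a distance for `l ↦ a (2 * l)` on `{0, …, 2 ^ s}`, whose dyadic sum consists
of the terms `i ≥ 1`, so the bound follows by induction on `s`.
-/

section PseudoMetricSpace

open Finset

variable {X : Type*} [PseudoMetricSpace X]

/-- The `2`-variation of `a` along the points `0, 1, …, N`, i.e. the `ℓ²` norm of the lengths of its
first `N` steps. -/
noncomputable def squareVariation (a : ℕ → X) (N : ℕ) : ℝ :=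
  √(∑ l ∈ range N, dist (a (l + 1)) (a l) ^ 2)

/-- The sum over the scales `i ≤ s` of the `2`-variation of `a` along the multiples of `2 ^ i` in
`{0, …, 2 ^ s}`. This is the factor next to `√2` in the Rademacher–Menshov inequality. -/
noncomputable def dyadicSquareVariation (a : ℕ → X) (s : ℕ) : ℝ :=
  ∑ i ∈ range (s + 1), squareVariation (fun l ↦ a (l * 2 ^ i)) (2 ^ (s - i))

lemma dyadicSquareVariation_nonneg (a : ℕ → X) (s : ℕ) : 0 ≤ dyadicSquareVariation a s :=
  sum_nonneg fun _ _ ↦ Real.sqrt_nonneg _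

lemma dyadicSquareVariation_zero (a : ℕ → X) :
    dyadicSquareVariation a 0 = squareVariation a 1 := by
  simp [dyadicSquareVariation]

lemma dyadicSquareVariation_succ (a : ℕ → X) (s : ℕ) :
    dyadicSquareVariation a (s + 1) =
      dyadicSquareVariation (fun l ↦ a (2 * l)) s + squareVariation a (2 ^ (s + 1)) := by
  have two_mul_scale (l i : ℕ) : 2 * (l * 2 ^ i) = l * 2 ^ (i + 1) := by ring
  simp only [dyadicSquareVariation, sum_range_succ' _ (s + 1), two_mul_scale,
    Nat.add_sub_add_right, pow_zero, mul_one, Nat.sub_zero]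

lemma add_le_sqrt_two_mul_sqrt_sq_add_sq (u v : ℝ) : u + v ≤ √2 * √(u ^ 2 + v ^ 2) := by
  rw [← Real.sqrt_mul zero_le_two]
  exact Real.le_sqrt_of_sq_le add_sq_le

lemma dist_sq_eq_sum_Ico_of_le_succ (a : ℕ → X) {m n : ℕ} (hmn : m ≤ n) (hnm : n ≤ m + 1) :
    dist (a n) (a m) ^ 2 = ∑ l ∈ Ico m n, dist (a (l + 1)) (a l) ^ 2 := by
  obtain rfl | rfl : n = m ∨ n = m + 1 := by lia
  all_goals simp

lemma dist_add_dist_le_sqrt_two_mul_squareVariation (a : ℕ → X) {m m' n' n N : ℕ}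
    (hm : m ≤ m') (hm' : m' ≤ m + 1) (hmn : m' ≤ n') (hn' : n' ≤ n) (hn : n ≤ n' + 1)
    (hN : n ≤ N) :
    dist (a m') (a m) + dist (a n) (a n') ≤ √2 * squareVariation a N := by
  let f : ℕ → ℝ := fun l ↦ dist (a (l + 1)) (a l) ^ 2
  have sq_add_sq_le : dist (a m') (a m) ^ 2 + dist (a n) (a n') ^ 2 ≤ ∑ l ∈ range N, f l :=
    calc dist (a m') (a m) ^ 2 + dist (a n) (a n') ^ 2
      _ = ∑ l ∈ Ico m m', f l + ∑ l ∈ Ico n' n, f l := by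
        rw [dist_sq_eq_sum_Ico_of_le_succ a hm hm', dist_sq_eq_sum_Ico_of_le_succ a hn' hn]
      _ = ∑ l ∈ Ico m m' ∪ Ico n' n, f l :=
        .symm <| sum_union <|
          (Ico_disjoint_Ico_consecutive m m' n).mono_right (Ico_subset_Ico_left hmn)
      _ ≤ ∑ l ∈ range N, f l :=
        sum_le_sum_of_subset_of_nonneg (by grind) fun _ _ _ ↦ sq_nonneg _
  calc dist (a m') (a m) + dist (a n) (a n')
    _ ≤ √2 * √(dist (a m') (a m) ^ 2 + dist (a n) (a n') ^ 2) :=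
      add_le_sqrt_two_mul_sqrt_sq_add_sq _ _
    _ ≤ √2 * squareVariation a N := by
      unfold squareVariation
      gcongr

lemma dist_le_sqrt_two_mul_dyadicSquareVariation_of_le (a : ℕ → X) {s m n : ℕ} (hmn : m ≤ n)
    (hn : n ≤ 2 ^ s) : dist (a n) (a m) ≤ √2 * dyadicSquareVariation a s := by
  induction s generalizing a m n with
  | zero =>
    rw [dyadicSquareVariation_zero]
    simpa using dist_add_dist_le_sqrt_two_mul_squareVariation a (N := 1) le_rfl m.le_succ le_rfl
      hmn (by lia) (by simpa using hn)
  | succ s ih =>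
    obtain rfl | hlt := hmn.eq_or_lt
    · rw [dist_self]
      exact mul_nonneg (Real.sqrt_nonneg 2) (dyadicSquareVariation_nonneg a _)
    set p := (m + 1) / 2
    set q := n / 2
    have inner : dist (a (2 * q)) (a (2 * p)) ≤ √2 * dyadicSquareVariation (fun l ↦ a (2 * l)) s :=
      ih (fun l ↦ a (2 * l)) (by lia) (by lia)
    have outer : dist (a (2 * p)) (a m) + dist (a n) (a (2 * q)) ≤
        √2 * squareVariation a (2 ^ (s + 1)) :=
      dist_add_dist_le_sqrt_two_mul_squareVariation a (by lia) (by lia) (by lia) (by lia) (by lia)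
        hn
    rw [dyadicSquareVariation_succ, mul_add]
    linarith [dist_triangle4 (a n) (a (2 * q)) (a (2 * p)) (a m)]

lemma dist_le_sqrt_two_mul_dyadicSquareVariation (a : ℕ → X) {s m n : ℕ} (hm : m ≤ 2 ^ s)
    (hn : n ≤ 2 ^ s) : dist (a m) (a n) ≤ √2 * dyadicSquareVariation a s := by
  obtain hmn | hnm := le_total m n
  · rw [dist_comm]
    exact dist_le_sqrt_two_mul_dyadicSquareVariation_of_le a hmn hn
  · exact dist_le_sqrt_two_mul_dyadicSquareVariation_of_le a hnm hm

end PseudoMetricSpace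

theorem statement4_general {E : Type*} [SeminormedAddCommGroup E] (s : ℕ) (a : ℕ → E) (j₀ : ℕ)
    (hj₀ : j₀ ≤ 2 ^ s) (j : ℕ) (hj : j ≤ 2 ^ s) :
    ‖a j‖ ≤ ‖a j₀‖ + √2 * ∑ i ∈ Finset.range (s + 1),
      √(∑ l ∈ Finset.range (2 ^ (s - i)), ‖a ((l + 1) * 2 ^ i) - a (l * 2 ^ i)‖ ^ 2) := by
  have dist_le : ‖a j - a j₀‖ ≤ √2 * dyadicSquareVariation a s :=
    dist_eq_norm (a j) (a j₀) ▸ dist_le_sqrt_two_mul_dyadicSquareVariation a hj hj₀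
  simp only [dyadicSquareVariation, squareVariation, dist_eq_norm] at dist_le
  exact (norm_le_norm_add_norm_sub' (a j) (a j₀)).trans (by gcongr)

/-- **Rademacher–Menshov type numerical inequality.**
For any sequence `(a_j)_{0 ≤ j ≤ 2^s}` of complex numbers and any `j₀ ∈ {0,…,2^s}`,
`max_{0 ≤ j ≤ 2^s} |a_j| ≤ |a_{j₀}| + √2 Σ_{i=0}^{s} (Σ_{j=0}^{2^{s-i}-1}
|a_{(j+1)2^i} − a_{j 2^i}|²)^{1/2}`. -/
theorem statement4 (s : ℕ) (a : ℕ → ℂ) (j₀ : ℕ) (hj₀ : j₀ ≤ 2 ^ s)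
    (j : ℕ) (hj : j ≤ 2 ^ s) :
    ‖a j‖ ≤ ‖a j₀‖ + Real.sqrt 2 *
      ∑ i ∈ Finset.range (s + 1),
        Real.sqrt (∑ l ∈ Finset.range (2 ^ (s - i)),
          ‖a ((l + 1) * 2 ^ i) - a (l * 2 ^ i)‖ ^ 2) :=
  statement4_general s a j₀ hj₀ j hj
end

section
/- Suppose θ ∈ ℝ and a, q are integers with gcd(a, q) = 1 and |θ − a/q| ≤ 1/q², and suppose (log N)^β ≤ q ≤ N^j (log N)^{−β}. Let Q be a positive integer with Q ≤ (log N)^{β'} where β' < β, and let β₂ > 0 satisfy β₂ < β/2 and β₂ < β − β'. Then, provided N is sufficiently large (depending only on β, β', β₂), there exist integers a', q' with gcd(a', q') = 1 such that |Qθ − a'/q'| ≤ (log N)^{β₂} / (q' N^j) and (log N)^{β₂} ≤ q' ≤ N^j (log N)^{−β₂}. -/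
/-!
Apply Dirichlet's theorem to `Qθ` with denominators up to `X = N ^ j / (log N) ^ β₂`. The only
issue is to exclude small denominators `q'`. If `a' / q' ≠ Q a / q`, these fractions are at least
`1 / (q q')` apart, while both are close to `Qθ`; if they are equal, then `q ∣ Q q'`. Either way
`q ≤ 2 Q q'`, so `q'` is at least about `(log N) ^ (β - β')`, which beats `(log N) ^ β₂`.
-/

open Filter

theorem one_div_den_mul_den_le_abs_sub {r s : ℚ} (hrs : r ≠ s) :
    1 / ((r.den : ℚ) * s.den) ≤ |r - s| := by
  have hden : (r - s).den ≤ r.den * s.den :=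
    Nat.le_of_dvd (by positivity) (Rat.sub_den_dvd r s)
  have hnum : (1 : ℚ) ≤ |((r - s).num : ℚ)| := by
    exact_mod_cast Int.one_le_abs (Rat.num_ne_zero.2 (sub_ne_zero.2 hrs))
  calc 1 / ((r.den : ℚ) * s.den) ≤ |((r - s).num : ℚ)| / (r - s).den := by
        gcongr
        exact_mod_cast hden
    _ = |r - s| := by rw [← Nat.abs_cast (r - s).den, ← abs_div, Rat.num_div_den]

theorem exists_rat_abs_sub_le_one_div_den_mul (ξ : ℝ) {X : ℝ} (hX : 1 ≤ X) :
    ∃ s : ℚ, |ξ - s| ≤ 1 / (s.den * X) ∧ (s.den : ℝ) ≤ X := by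
  obtain ⟨s, hs, hden⟩ := Real.exists_rat_abs_sub_le_and_den_le ξ (Nat.floor_pos.2 hX)
  refine ⟨s, hs.trans ?_, (Nat.cast_le.2 hden).trans (Nat.floor_le (by linarith))⟩
  rw [mul_comm]
  gcongr
  exact (Nat.lt_floor_add_one X).le

theorem den_le_mul_den_natCast_mul {Q : ℕ} (hQ : 0 < Q) (r : ℚ) :
    r.den ≤ Q * (Q * r : ℚ).den := by
  have hQ_ne : (Q : ℚ) ≠ 0 := by exact_mod_cast hQ.ne'
  have hdvd := Rat.mul_den_dvd (Q : ℚ)⁻¹ (Q * r)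
  rw [inv_mul_cancel_left₀ hQ_ne, Rat.inv_natCast_den_of_pos hQ] at hdvd
  exact Nat.le_of_dvd (by positivity) hdvd

theorem den_natCast_mul_le (Q : ℕ) (r : ℚ) : (Q * r : ℚ).den ≤ r.den :=
  Nat.le_of_dvd r.pos (by simpa only [Rat.den_natCast, one_mul] using Rat.mul_den_dvd (Q : ℚ) r)

theorem one_div_den_mul_den_le_abs_natCast_mul_sub {Q : ℕ} {r s : ℚ} (hrs : Q * r ≠ s) :
    1 / ((r.den : ℚ) * s.den) ≤ |Q * r - s| := calc
  1 / ((r.den : ℚ) * s.den) ≤ 1 / (((Q * r : ℚ).den : ℚ) * s.den) := by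
    gcongr
    exact den_natCast_mul_le Q r
  _ ≤ |Q * r - s| := one_div_den_mul_den_le_abs_sub hrs

theorem den_le_two_mul_mul_den {θ X : ℝ} {Q : ℕ} {r s : ℚ} (hQ : 0 < Q)
    (hr : |θ - r| ≤ 1 / (r.den : ℝ) ^ 2) (hs : |Q * θ - s| ≤ 1 / (s.den * X))
    (hX : 2 * r.den ≤ X) : (r.den : ℝ) ≤ 2 * Q * s.den := by
  rcases eq_or_ne (Q * r : ℚ) s with heq | hne
  · have hle : (r.den : ℝ) ≤ Q * s.den := by
      exact_mod_cast heq ▸ den_le_mul_den_natCast_mul hQ r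
    linarith
  · have hsep : 1 / ((r.den : ℝ) * s.den) ≤ |Q * (r : ℝ) - s| := by
      have hsep_rat := (Rat.cast_le (K := ℝ)).2 (one_div_den_mul_den_le_abs_natCast_mul_sub hne)
      push_cast at hsep_rat
      exact hsep_rat
    -- Since `2 * r.den ≤ X`, the error of `s` uses up at most half of the separation.
    have hclose : |Q * (r : ℝ) - s| ≤ Q / (r.den : ℝ) ^ 2 + 1 / (2 * (r.den * s.den)) := calc
      |Q * (r : ℝ) - s| ≤ |Q * (r : ℝ) - Q * θ| + |Q * θ - s| := abs_sub_le _ _ _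
      _ = Q * |θ - r| + |Q * θ - s| := by rw [← mul_sub, abs_mul, Nat.abs_cast, abs_sub_comm θ]
      _ ≤ Q * (1 / (r.den : ℝ) ^ 2) + 1 / (s.den * (2 * r.den)) := by
        gcongr
        exact hs.trans (by gcongr)
      _ = Q / (r.den : ℝ) ^ 2 + 1 / (2 * (r.den * s.den)) := by ring
    have hhalf : 1 / (2 * ((r.den : ℝ) * s.den)) ≤ Q / (r.den : ℝ) ^ 2 := by
      have hsplit : 1 / ((r.den : ℝ) * s.den) =
          1 / (2 * (r.den * s.den)) + 1 / (2 * (r.den * s.den)) := by ring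
      linarith
    rw [div_le_div_iff₀ (by positivity) (by positivity)] at hhalf
    refine le_of_mul_le_mul_left (a := (r.den : ℝ)) ?_ (by positivity)
    linarith

theorem exists_rat_approx_natCast_mul {θ X : ℝ} {Q : ℕ} {r : ℚ} (hQ : 0 < Q)
    (hr : |θ - r| ≤ 1 / (r.den : ℝ) ^ 2) (hX : 2 * r.den ≤ X) :
    ∃ s : ℚ, |Q * θ - s| ≤ 1 / (s.den * X) ∧ (r.den : ℝ) ≤ 2 * Q * s.den ∧ (s.den : ℝ) ≤ X := by
  have hr_den : (1 : ℝ) ≤ r.den := by exact_mod_cast r.pos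
  obtain ⟨s, hs, hsX⟩ := exists_rat_abs_sub_le_one_div_den_mul (Q * θ) (X := X) (by linarith)
  exact ⟨s, hs, den_le_two_mul_mul_den hQ hr hs hX, hsX⟩

theorem exists_rat_approx_natCast_mul_of_le_den_of_den_le {θ A C M : ℝ} {Q : ℕ} {r : ℚ} (hQ : 0 < Q)
    (hC : 0 < C) (hA : 2 * (Q * C) ≤ A) (hr : |θ - r| ≤ 1 / (r.den : ℝ) ^ 2)
    (hr_lower : A ≤ r.den) (hr_upper : r.den ≤ M / A) :
    ∃ s : ℚ, |Q * θ - s| ≤ C / (s.den * M) ∧ C ≤ s.den ∧ (s.den : ℝ) ≤ M / C := by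
  have hQ_one : (1 : ℝ) ≤ Q := by exact_mod_cast hQ
  have hA_pos : 0 < A := lt_of_lt_of_le (by positivity) hA
  have hheight : 2 * r.den ≤ M / C := by
    rw [le_div_iff₀ hA_pos] at hr_upper
    rw [le_div_iff₀ hC]
    calc 2 * (r.den : ℝ) * C = r.den * (2 * (1 * C)) := by ring
      _ ≤ r.den * (2 * (Q * C)) := by gcongr
      _ ≤ r.den * A := by gcongr
      _ ≤ M := hr_upper
  obtain ⟨s, hs, hs_lower, hs_upper⟩ := exists_rat_approx_natCast_mul hQ hr hheight
  refine ⟨s, hs.trans_eq (by field_simp), ?_, hs_upper⟩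
  refine le_of_mul_le_mul_left (a := 2 * (Q : ℝ)) ?_ (by positivity)
  calc 2 * Q * C = 2 * (Q * C) := mul_assoc _ _ _
    _ ≤ r.den := hA.trans hr_lower
    _ ≤ 2 * Q * s.den := hs_lower

theorem eventually_const_mul_rpow_mul_rpow_le (K : ℝ) {b c d : ℝ} (h : c < d - b) :
    ∀ᶠ L : ℝ in atTop, K * (L ^ b * L ^ c) ≤ L ^ d := by
  have hgrowth : Tendsto (fun L : ℝ ↦ L ^ (d - (b + c))) atTop atTop :=
    tendsto_rpow_atTop (by linarith)
  filter_upwards [hgrowth.eventually_ge_atTop K, eventually_gt_atTop 0] with L hL hL_pos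
  rwa [Real.rpow_sub hL_pos, le_div_iff₀ (by positivity), Real.rpow_add hL_pos] at hL

theorem statement8_general {β β' β₂ : ℝ} (hβ₂ : β₂ < β - β') :
    ∀ᶠ L : ℝ in atTop, ∀ (M θ : ℝ) (a : ℤ) (q : ℕ), Int.gcd a q = 1 →
      |θ - (a : ℝ) / q| ≤ 1 / (q : ℝ) ^ 2 → L ^ β ≤ (q : ℝ) → (q : ℝ) ≤ M * L ^ (-β) →
      ∀ Q : ℕ, 0 < Q → (Q : ℝ) ≤ L ^ β' →
        ∃ (a' : ℤ) (q' : ℕ), 0 < q' ∧ Int.gcd a' q' = 1 ∧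
          |(Q : ℝ) * θ - (a' : ℝ) / q'| ≤ L ^ β₂ / ((q' : ℝ) * M) ∧
          L ^ β₂ ≤ (q' : ℝ) ∧ (q' : ℝ) ≤ M * L ^ (-β₂) := by
  filter_upwards [eventually_const_mul_rpow_mul_rpow_le 2 hβ₂, eventually_gt_atTop 0]
    with L hL hL_pos M θ a q hcoprime hθ hq_lower hq_upper Q hQ hQ_upper
  have hβ₂_pos : 0 < L ^ β₂ := Real.rpow_pos_of_pos hL_pos β₂
  have hQL : 2 * (Q * L ^ β₂) ≤ L ^ β := le_trans (by gcongr) hL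
  have hq : (0 : ℝ) < q := (Real.rpow_pos_of_pos hL_pos β).trans_le hq_lower
  rw [Real.rpow_neg hL_pos.le, ← div_eq_mul_inv] at hq_upper ⊢
  let r : ℚ := ⟨a, q, by exact_mod_cast hq.ne', hcoprime⟩
  obtain ⟨s, hs, hs_lower, hs_upper⟩ := exists_rat_approx_natCast_mul_of_le_den_of_den_le (r := r)
    hQ hβ₂_pos hQL (by rwa [Rat.cast_def]) hq_lower hq_upper
  exact ⟨s.num, s.den, s.pos, s.reduced, by rwa [← Rat.cast_def], hs_lower, hs_upper⟩

/-- **Lemma on rational approximation of `Qθ` (Lemma 11).**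
If `|θ − a/q| ≤ 1/q²` with `gcd(a,q) = 1` and `(log N)^β ≤ q ≤ N^j (log N)^{−β}`, and if
`Q ≤ (log N)^{β'}` with `β' < β` and `β₂ < β/2`, `β₂ < β − β'`, then, for `N` sufficiently
large (depending only on `β, β', β₂`), there is a reduced fraction `a'/q'` with
`|Qθ − a'/q'| ≤ (log N)^{β₂}/(q' N^j)` and `(log N)^{β₂} ≤ q' ≤ N^j (log N)^{−β₂}`. -/
theorem statement8 (β β' β₂ : ℝ) (hβ'pos : 0 < β') (hβ' : β' < β) (hβ₂pos : 0 < β₂)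
    (hβ₂1 : β₂ < β / 2) (hβ₂2 : β₂ < β - β') :
    ∃ N₀ : ℕ, ∀ N : ℕ, N₀ ≤ N → ∀ j : ℕ, 1 ≤ j →
      ∀ (θ : ℝ) (a : ℤ) (q : ℕ), 0 < q → Int.gcd a q = 1 →
        |θ - (a : ℝ) / q| ≤ 1 / (q : ℝ) ^ 2 →
        Real.log N ^ β ≤ (q : ℝ) → (q : ℝ) ≤ (N : ℝ) ^ j * Real.log N ^ (-β) →
        ∀ Q : ℕ, 0 < Q → (Q : ℝ) ≤ Real.log N ^ β' →
          ∃ (a' : ℤ) (q' : ℕ), 0 < q' ∧ Int.gcd a' q' = 1 ∧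
            |(Q : ℝ) * θ - (a' : ℝ) / q'| ≤ Real.log N ^ β₂ / ((q' : ℝ) * (N : ℝ) ^ j) ∧
            Real.log N ^ β₂ ≤ (q' : ℝ) ∧ (q' : ℝ) ≤ (N : ℝ) ^ j * Real.log N ^ (-β₂) := by
  obtain ⟨N₀, hN₀⟩ := eventually_atTop.1 <| (Real.tendsto_log_atTop.comp
    tendsto_natCast_atTop_atTop).eventually (statement8_general hβ₂2)
  exact ⟨N₀, fun N hN j _ θ a q _ ↦ hN₀ N hN (N ^ j) θ a q⟩
end

section
/- Sampling lemma: let p ∈ [1, ∞), Q ∈ ℕ, and suppose every diagonal entry of R is ≥ h where h ≥ 2Q^{d+1}. Then for every m ∈ {1,…,Q}^d and every finitely supported f : ℤ^d → ℂ, setting g(x) = ∫_{[0,1)^d} e^{−2πi ξ·x} η(Rξ) f̂(ξ) dξ (x ∈ ℤ^d), one has (1/2) Q^{−d/p} ‖g‖_{ℓ^p(ℤ^d)} ≤ ( Σ_{x∈ℤ^d} |g(Qx + m)|^p )^{1/p} ≤ 2 Q^{−d/p} ‖g‖_{ℓ^p(ℤ^d)}; in particular the two quantities are comparable with constants independent of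 Q, h, m and f. -/
open scoped ENNReal

noncomputable section

/-- Discrete Fourier transform of a finitely supported `f : ℤ^d → ℂ`. -/
def discFourier (d : ℕ) (f : (Fin d → ℤ) → ℂ) (ξ : EuclideanSpace ℝ (Fin d)) : ℂ :=
  ∑' y : Fin d → ℤ, f y * Complex.exp (2 * Real.pi * Complex.I * (∑ i, ξ i * (y i : ℝ)))

/-- `g = ℱ^{−1}(η(R·) f̂)`, the band-limited piece of `f`. -/
def bandPiece (d : ℕ) (η : EuclideanSpace ℝ (Fin d) → ℝ) (R : Fin d → ℝ)
    (f : (Fin d → ℤ) → ℂ) (x : Fin d → ℤ) : ℂ :=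
  ∫ ξ in {ξ : EuclideanSpace ℝ (Fin d) | ∀ i, ξ i ∈ Set.Ico (0 : ℝ) 1},
    Complex.exp (-(2 * Real.pi * Complex.I) * (∑ i, ξ i * (x i : ℝ))) *
      ((η (WithLp.toLp 2 fun i => R i * ξ i) : ℝ) : ℂ) * discFourier d f ξ

/-!
By the support condition on `η`, the integral defining `g = bandPiece d η R f` only sees
frequencies with `0 ≤ Q ξᵢ ≤ 1 / (8 d)`. Along a residue class, `x ↦ g (Q x + m)` is the transform
of `e^{-2πi ξ·m} F(ξ)` at the frequency `Q ξ`, so passing from `m` to `m'` multiplies the transform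
by `e^{-2πi Qξ·β}` with `β = (m' - m) / Q`, a translation by a fraction of the lattice.

On a frequency box this short, fractional translations are bounded on `ℓ^p` uniformly in `Q`:
after subtracting a constant from each `Qξᵢ`, the `4 d`-fold multiple of the rest lies in
`[-1/4, 1/4]`, where the `1`-periodic triangle wave
`∑ (πn)⁻² (cos 2πn(t + 3/4) - cos 2πn(t + 1/4))` equals `t`. Each cosine is an average of two
characters of the lattice, hence a multiplier of norm at most `1`, so `t` is one of norm at most
`2π⁻² ∑ n⁻² = 1/3`; exponentiating bounds the fractional translation by `e^{π/6} ≤ 2`. Hence the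
`ℓ^p` norms over all residue classes agree up to a factor `2`, and `‖g‖_p^p` is the sum of their
`p`-th powers over `Q^d` residue classes.
-/

open MeasureTheory Measure Filter Topology
open scoped NNReal FourierTransform Real

theorem hasSum_cos_sub_cos {t : ℝ} (ht : |t| ≤ 1 / 4) :
    HasSum (fun n : ℕ => 1 / (π ^ 2 * n ^ 2) *
      (Real.cos (2 * π * n * (t + 3 / 4)) - Real.cos (2 * π * n * (t + 1 / 4)))) t := by
  obtain ⟨hneg, hpos⟩ := abs_le.1 ht
  have hbernoulli (y : ℝ) : ((Polynomial.bernoulli (2 * 1)).map (algebraMap ℚ ℝ)).eval y =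
      y ^ 2 - y + 6⁻¹ := bernoulliFun_two y
  have hseries (y : ℝ) (hy : y ∈ Set.Icc (0 : ℝ) 1) :=
    hbernoulli y ▸ hasSum_one_div_nat_pow_mul_cos one_ne_zero hy
  have hdiff := ((hseries (t + 3 / 4) ⟨by linarith, by linarith⟩).sub
    (hseries (t + 1 / 4) ⟨by linarith, by linarith⟩)).mul_left (1 / π ^ 2)
  convert! hdiff using 1
  · funext n
    ring
  · simp only [Nat.mul_one, Nat.factorial_two, Nat.reduceAdd, even_two, Even.neg_pow, one_pow]
    push_cast
    field_simp
    ring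

section Multiplier

variable {G Ω : Type*} [AddCommGroup G] [MeasurableSpace Ω]

/-- The Fourier transform, as a function on `G`, of the complex measure `F ν` on a space `Ω` that
parametrizes the characters `χ ω` of `G`. -/
def charIntegral (χ : Ω → AddChar G Circle) (ν : Measure Ω) (F : Ω → ℂ) (x : G) : ℂ :=
  ∫ ω, χ ω x * F ω ∂ν

variable {χ : Ω → AddChar G Circle} {ν : Measure Ω}

theorem integrable_char_mul (hχ : ∀ x, AEStronglyMeasurable (fun ω => (χ ω x : ℂ)) ν) (x : G)
    {F : Ω → ℂ} (hF : Integrable F ν) : Integrable (fun ω => χ ω x * F ω) ν :=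
  hF.bdd_mul (hχ x) (Eventually.of_forall fun ω => (Circle.norm_coe (χ ω x)).le)

variable [MeasurableSpace G]

/-- `a` is an `ℓ^p(G)` Fourier multiplier of norm at most `B` on the frequency space `(Ω, ν)`.
No finiteness of `ℓ^p` norms is required, so that multipliers act on all transforms of integrable
functions. The pointwise bound is part of the definition because it makes `a * F` integrable. -/
structure IsLpMultiplier (p : ℝ≥0∞) (χ : Ω → AddChar G Circle) (ν : Measure Ω) (a : Ω → ℂ)
    (B : ℝ≥0) : Prop where
  aestronglyMeasurable : AEStronglyMeasurable a ν
  ae_norm_le : ∀ᵐ ω ∂ν, ‖a ω‖ ≤ B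
  eLpNorm_le : ∀ F, Integrable F ν →
    eLpNorm (charIntegral χ ν (a * F)) p count ≤ B * eLpNorm (charIntegral χ ν F) p count

variable {p : ℝ≥0∞} {a b : Ω → ℂ} {A B : ℝ≥0}

namespace IsLpMultiplier

theorem integrable_mul (ha : IsLpMultiplier p χ ν a A) {F : Ω → ℂ} (hF : Integrable F ν) :
    Integrable (a * F) ν :=
  hF.bdd_mul ha.aestronglyMeasurable ha.ae_norm_le

theorem mono (ha : IsLpMultiplier p χ ν a A) (hAB : A ≤ B) : IsLpMultiplier p χ ν a B where
  aestronglyMeasurable := ha.aestronglyMeasurable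
  ae_norm_le := ha.ae_norm_le.mono fun _ h => h.trans (NNReal.coe_le_coe.2 hAB)
  eLpNorm_le F hF := (ha.eLpNorm_le F hF).trans (by gcongr)

theorem mul (ha : IsLpMultiplier p χ ν a A) (hb : IsLpMultiplier p χ ν b B) :
    IsLpMultiplier p χ ν (a * b) (A * B) where
  aestronglyMeasurable := ha.aestronglyMeasurable.mul hb.aestronglyMeasurable
  ae_norm_le := by
    filter_upwards [ha.ae_norm_le, hb.ae_norm_le] with ω haω hbω
    rw [Pi.mul_apply, norm_mul, NNReal.coe_mul]
    gcongr
  eLpNorm_le F hF := calc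
    eLpNorm (charIntegral χ ν (a * b * F)) p count
      ≤ A * eLpNorm (charIntegral χ ν (b * F)) p count := by
        rw [mul_assoc]
        exact ha.eLpNorm_le _ (hb.integrable_mul hF)
    _ ≤ A * (B * eLpNorm (charIntegral χ ν F) p count) := by
        gcongr
        exact hb.eLpNorm_le F hF
    _ = ↑(A * B) * eLpNorm (charIntegral χ ν F) p count := by rw [ENNReal.coe_mul, mul_assoc]

theorem const (c : ℂ) : IsLpMultiplier p χ ν (fun _ => c) ‖c‖₊ where
  aestronglyMeasurable := aestronglyMeasurable_const
  ae_norm_le := Eventually.of_forall fun _ => le_rfl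
  eLpNorm_le F _ := by
    have hsmul : charIntegral χ ν ((fun _ => c) * F) = c • charIntegral χ ν F := by
      funext x
      simp only [charIntegral, Pi.mul_apply, Pi.smul_apply, smul_eq_mul, mul_left_comm,
        integral_const_mul]
    rw [hsmul, eLpNorm_const_smul, enorm_eq_nnnorm]

theorem pow (ha : IsLpMultiplier p χ ν a A) (n : ℕ) : IsLpMultiplier p χ ν (a ^ n) (A ^ n) := by
  induction n with
  | zero =>
    rw [pow_zero, pow_zero, ← nnnorm_one (G := ℂ)]
    exact const 1
  | succ n ih => simpa only [pow_succ] using ih.mul ha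

variable [Countable G] [MeasurableSingletonClass G]

theorem char (hχ : ∀ x, AEStronglyMeasurable (fun ω => (χ ω x : ℂ)) ν) (k : G) :
    IsLpMultiplier p χ ν (fun ω => (χ ω k : ℂ)) 1 where
  aestronglyMeasurable := hχ k
  ae_norm_le := Eventually.of_forall fun ω => (Circle.norm_coe (χ ω k)).le
  eLpNorm_le F _ := by
    have htranslate : charIntegral χ ν ((fun ω => (χ ω k : ℂ)) * F) =
        charIntegral χ ν F ∘ (· + k) := by
      funext x
      simp only [charIntegral, Function.comp_apply, Pi.mul_apply, AddChar.map_add_eq_mul,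
        Circle.coe_mul, mul_assoc]
    rw [htranslate, eLpNorm_comp_measurePreserving .of_discrete
      (measurePreserving_add_right count k), ENNReal.coe_one, one_mul]

theorem add (hp : 1 ≤ p) (hχ : ∀ x, AEStronglyMeasurable (fun ω => (χ ω x : ℂ)) ν)
    (ha : IsLpMultiplier p χ ν a A) (hb : IsLpMultiplier p χ ν b B) :
    IsLpMultiplier p χ ν (a + b) (A + B) where
  aestronglyMeasurable := ha.aestronglyMeasurable.add hb.aestronglyMeasurable
  ae_norm_le := by
    filter_upwards [ha.ae_norm_le, hb.ae_norm_le] with ω haω hbω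
    exact (norm_add_le _ _).trans (add_le_add haω hbω)
  eLpNorm_le F hF := by
    have hadd : charIntegral χ ν ((a + b) * F) =
        charIntegral χ ν (a * F) + charIntegral χ ν (b * F) := by
      funext x
      simp only [charIntegral, Pi.add_apply, add_mul, mul_add]
      exact integral_add (integrable_char_mul hχ x (ha.integrable_mul hF))
        (integrable_char_mul hχ x (hb.integrable_mul hF))
    rw [hadd, ENNReal.coe_add, add_mul]
    exact (eLpNorm_add_le .of_discrete .of_discrete hp).trans
      (add_le_add (ha.eLpNorm_le F hF) (hb.eLpNorm_le F hF))

theorem sub (hp : 1 ≤ p) (hχ : ∀ x, AEStronglyMeasurable (fun ω => (χ ω x : ℂ)) ν)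
    (ha : IsLpMultiplier p χ ν a A) (hb : IsLpMultiplier p χ ν b B) :
    IsLpMultiplier p χ ν (a - b) (A + B) := by
  convert ha.add hp hχ ((const (-1)).mul hb) using 1
  · funext ω
    simp only [Pi.sub_apply, Pi.add_apply, Pi.mul_apply, neg_one_mul, sub_eq_add_neg]
  · rw [nnnorm_neg, nnnorm_one, one_mul]

theorem sum (hp : 1 ≤ p) (hχ : ∀ x, AEStronglyMeasurable (fun ω => (χ ω x : ℂ)) ν) {ι : Type*}
    (s : Finset ι) {a : ι → Ω → ℂ} {B : ι → ℝ≥0} (ha : ∀ n, IsLpMultiplier p χ ν (a n) (B n)) :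
    IsLpMultiplier p χ ν (∑ n ∈ s, a n) (∑ n ∈ s, B n) := by
  classical
  induction s using Finset.induction_on with
  | empty =>
    rw [Finset.sum_empty, Finset.sum_empty, ← nnnorm_zero (E := ℂ)]
    exact const 0
  | insert n s hn ih => simpa only [Finset.sum_insert hn] using (ha n).add hp hχ ih

theorem of_tendsto (hχ : ∀ x, AEStronglyMeasurable (fun ω => (χ ω x : ℂ)) ν) {a : ℕ → Ω → ℂ}
    {b : Ω → ℂ} (ha : ∀ n, IsLpMultiplier p χ ν (a n) B)
    (hlim : ∀ᵐ ω ∂ν, Tendsto (fun n => a n ω) atTop (𝓝 (b ω))) : IsLpMultiplier p χ ν b B where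
  aestronglyMeasurable :=
    aestronglyMeasurable_of_tendsto_ae atTop (fun n => (ha n).aestronglyMeasurable) hlim
  ae_norm_le := by
    filter_upwards [hlim, ae_all_iff.2 fun n => (ha n).ae_norm_le] with ω hω hB
    exact le_of_tendsto hω.norm (Eventually.of_forall hB)
  eLpNorm_le F hF := by
    refine Lp.eLpNorm_le_of_ae_tendsto (u := atTop)
      (Eventually.of_forall fun n => (ha n).eLpNorm_le F hF) (fun n => .of_discrete)
      (Eventually.of_forall fun x => ?_)
    refine tendsto_integral_of_dominated_convergence (fun ω => B * ‖F ω‖)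
      (fun n => (integrable_char_mul hχ x ((ha n).integrable_mul hF)).aestronglyMeasurable)
      (hF.norm.const_mul _) (fun n => ?_) ?_
    · filter_upwards [(ha n).ae_norm_le] with ω hω
      rw [norm_mul, Circle.norm_coe, one_mul, Pi.mul_apply, norm_mul]
      gcongr
    · filter_upwards [hlim] with ω hω
      exact (hω.mul_const _).const_mul _

theorem hasSum (hp : 1 ≤ p) (hχ : ∀ x, AEStronglyMeasurable (fun ω => (χ ω x : ℂ)) ν)
    {a : ℕ → Ω → ℂ} {B : ℕ → ℝ≥0} (ha : ∀ n, IsLpMultiplier p χ ν (a n) (B n)) {S : ℝ≥0}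
    (hB : HasSum B S) {b : Ω → ℂ} (hb : ∀ᵐ ω ∂ν, HasSum (fun n => a n ω) (b ω)) :
    IsLpMultiplier p χ ν b S := by
  refine of_tendsto hχ (fun n => (sum hp hχ (Finset.range n) ha).mono
    (sum_le_hasSum _ (fun _ _ => zero_le) hB)) ?_
  filter_upwards [hb] with ω hω
  simpa only [Finset.sum_apply] using hω.tendsto_sum_nat

theorem cexp (hp : 1 ≤ p) (hχ : ∀ x, AEStronglyMeasurable (fun ω => (χ ω x : ℂ)) ν)
    (ha : IsLpMultiplier p χ ν a A) :
    IsLpMultiplier p χ ν (fun ω => Complex.exp (a ω)) (Real.exp A).toNNReal := by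
  refine hasSum hp hχ (fun n : ℕ => (const ((n.factorial : ℂ)⁻¹)).mul (ha.pow n)) ?_
    (Eventually.of_forall fun ω => ?_)
  · rw [← NNReal.hasSum_coe, Real.coe_toNNReal _ (Real.exp_pos _).le, Real.exp_eq_exp_ℝ]
    simpa [div_eq_inv_mul] using NormedSpace.expSeries_div_hasSum_exp (A : ℝ)
  · rw [Complex.exp_eq_exp_ℂ]
    simpa only [Pi.mul_apply, Pi.pow_apply, div_eq_inv_mul] using
      NormedSpace.expSeries_div_hasSum_exp (a ω)

theorem re_mul_char (hp : 1 ≤ p) (hχ : ∀ x, AEStronglyMeasurable (fun ω => (χ ω x : ℂ)) ν)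
    (z : Circle) (k : G) :
    IsLpMultiplier p χ ν (fun ω => (((z * χ ω k : Circle) : ℂ).re : ℂ)) 1 := by
  convert ((const ((z : ℂ) / 2)).mul (char hχ k)).add hp hχ
    ((const (((z⁻¹ : Circle) : ℂ) / 2)).mul (char hχ (-k))) using 1
  · funext ω
    have hconj : (starRingEnd ℂ) ((z * χ ω k : Circle) : ℂ) = (z⁻¹ : Circle) * (χ ω (-k) : ℂ) := by
      rw [← Circle.coe_inv_eq_conj, mul_inv, AddChar.map_neg_eq_inv, Circle.coe_mul]
    rw [Complex.re_eq_add_conj, hconj, Circle.coe_mul]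
    simp only [Pi.add_apply, Pi.mul_apply]
    ring
  · ext
    norm_num [Circle.norm_coe]

theorem ofReal_phase (hp : 1 ≤ p) (hχ : ∀ x, AEStronglyMeasurable (fun ω => (χ ω x : ℂ)) ν) (k : G)
    (c : ℝ) {θ : Ω → ℝ} (hθ : ∀ᵐ ω ∂ν, χ ω k = 𝐞 (c + θ ω) ∧ |θ ω| ≤ 1 / 4) :
    IsLpMultiplier p χ ν (fun ω => (θ ω : ℂ)) (1 / 3) := by
  have hcos (n : ℕ) (s : ℝ) := re_mul_char (p := p) (ν := ν) hp hχ (𝐞 (n * (s - c))) (n • k)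
  refine hasSum hp hχ (fun n : ℕ => (const ((1 / (π ^ 2 * n ^ 2) : ℝ) : ℂ)).mul
    ((hcos n (3 / 4)).sub hp hχ (hcos n (1 / 4)))) ?_ ?_
  · rw [← NNReal.hasSum_coe]
    convert! hasSum_zeta_two.mul_left (2 / π ^ 2) using 1
    · funext n
      rw [NNReal.coe_mul, coe_nnnorm, Complex.norm_real, Real.norm_of_nonneg (by positivity)]
      push_cast
      ring
    · push_cast
      field_simp
      norm_num
  · filter_upwards [hθ] with ω ⟨hχω, hθω⟩
    have hre (n : ℕ) (s : ℝ) : ((𝐞 (n * (s - c)) * χ ω (n • k) : Circle) : ℂ).re =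
        Real.cos (2 * π * n * (θ ω + s)) := by
      rw [AddChar.map_nsmul_eq_pow, hχω, ← AddChar.map_nsmul_eq_pow, ← AddChar.map_add_eq_mul,
        Real.fourierChar_apply, Complex.exp_ofReal_mul_I_re]
      congr 1
      rw [nsmul_eq_mul]
      ring
    convert Complex.hasSum_ofReal.2 (hasSum_cos_sub_cos hθω) using 1
    funext n
    simp only [Pi.mul_apply, Pi.sub_apply, hre, Complex.ofReal_mul, Complex.ofReal_sub]

end IsLpMultiplier
end Multiplier

section Lattice

variable {ι Ω : Type*} [Fintype ι]

/-- The character `x ↦ e^{-2πi ξ·x}` of the lattice `ℤ^ι`, where `ξ` is a frequency in `ℝ^ι`. -/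
def latticeChar (ξ : ι → ℝ) : AddChar (ι → ℤ) Circle where
  toFun x := 𝐞 (-(ξ ⬝ᵥ fun i => (x i : ℝ)))
  map_zero_eq_one' := by simp [dotProduct]
  map_add_eq_mul' x y := by
    rw [← AddChar.map_add_eq_mul, ← neg_add, ← dotProduct_add]
    simp only [Pi.add_def, Int.cast_add]

theorem latticeChar_apply (ξ : ι → ℝ) (x : ι → ℤ) :
    latticeChar ξ x = 𝐞 (-(ξ ⬝ᵥ fun i => (x i : ℝ))) :=
  rfl

theorem continuous_latticeChar (x : ι → ℤ) : Continuous fun ξ : ι → ℝ => (latticeChar ξ x : ℂ) := by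
  simp only [latticeChar_apply]
  fun_prop

variable [MeasurableSpace Ω] {p : ℝ≥0∞} {ν : Measure Ω} {Ξ : Ω → ι → ℝ}

theorem aestronglyMeasurable_latticeChar (hΞ : AEMeasurable Ξ ν) (x : ι → ℤ) :
    AEStronglyMeasurable (fun ω => (latticeChar (Ξ ω) x : ℂ)) ν :=
  ((continuous_latticeChar x).measurable.comp_aemeasurable hΞ).aestronglyMeasurable

theorem IsLpMultiplier.fractionalShift (hp : 1 ≤ p) (hΞ : AEMeasurable Ξ ν) {L : ℕ} (hL : 0 < L)
    {c : ι → ℝ} (hc : ∀ᵐ ω ∂ν, ∀ i, |Ξ ω i - c i| ≤ 1 / (4 * L)) (β : ι → ℝ) :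
    IsLpMultiplier p (fun ω => latticeChar (Ξ ω)) ν (fun ω => (𝐞 (-(Ξ ω ⬝ᵥ β)) : ℂ))
      (Real.exp (2 * π / (3 * L) * ∑ i, |β i|)).toNNReal := by
  classical
  have hL' : (L : ℂ) ≠ 0 := Nat.cast_ne_zero.2 hL.ne'
  have hχ := aestronglyMeasurable_latticeChar hΞ
  have hphase (i : ι) : IsLpMultiplier p (fun ω => latticeChar (Ξ ω)) ν
      (fun ω => ((-(L * (Ξ ω i - c i)) : ℝ) : ℂ)) (1 / 3) := by
    refine ofReal_phase hp hχ (Pi.single i (L : ℤ)) (-(L * c i)) ?_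
    filter_upwards [hc] with ω hω
    constructor
    · rw [latticeChar_apply]
      congr 1
      simp only [dotProduct, Pi.single_apply, Int.cast_ite, Int.cast_natCast, Int.cast_zero,
        mul_ite, mul_zero, Finset.sum_ite_eq', Finset.mem_univ, if_true]
      ring
    · rw [abs_neg, abs_mul, Nat.abs_cast]
      calc (L : ℝ) * |Ξ ω i - c i| ≤ L * (1 / (4 * L)) := by gcongr; exact hω i
        _ = 1 / 4 := by field_simp
  have hexp := (sum hp hχ Finset.univ fun i =>
    (const (2 * π * Complex.I * β i / L)).mul (hphase i)).cexp hp hχ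
  convert (const (𝐞 (-(c ⬝ᵥ β)) : ℂ)).mul hexp using 1
  · funext ω
    simp only [Pi.mul_apply, Finset.sum_apply, Real.fourierChar_apply, ← Complex.exp_add,
      dotProduct]
    congr 1
    push_cast
    simp only [← Finset.sum_neg_distrib, Finset.mul_sum, Finset.sum_mul, ← Finset.sum_add_distrib]
    refine Finset.sum_congr rfl fun i _ => ?_
    field_simp
    ring
  · rw [← NNReal.coe_inj]
    simp only [NNReal.coe_mul, coe_nnnorm, Circle.norm_coe, one_mul, NNReal.coe_sum]
    congr 3
    rw [Finset.mul_sum]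
    refine Finset.sum_congr rfl fun i _ => ?_
    simp only [Complex.norm_div, Complex.norm_mul, Complex.norm_ofNat, Complex.norm_real,
      Real.norm_eq_abs, abs_of_pos Real.pi_pos, Complex.norm_I, mul_one, RCLike.norm_natCast,
      one_div, NNReal.coe_inv, NNReal.coe_ofNat]
    field_simp

theorem latticeChar_nsmul (ξ : ι → ℝ) (n : ℕ) (x : ι → ℤ) :
    latticeChar ξ (n • x) = latticeChar (n • ξ) x := by
  rw [latticeChar_apply, latticeChar_apply]
  congr 2
  refine Finset.sum_congr rfl fun i _ => ?_
  simp only [Pi.smul_apply, nsmul_eq_mul, Int.cast_mul, Int.cast_natCast]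
  ring

theorem charIntegral_nsmul_add (F : Ω → ℂ) (n : ℕ) (x m : ι → ℤ) :
    charIntegral (fun ω => latticeChar (Ξ ω)) ν F (n • x + m) =
      charIntegral (fun ω => latticeChar (n • Ξ ω)) ν (fun ω => latticeChar (Ξ ω) m * F ω) x := by
  simp only [charIntegral, AddChar.map_add_eq_mul, latticeChar_nsmul, Circle.coe_mul, mul_assoc]

theorem latticeChar_eq_fractionalShift_mul (ξ : ι → ℝ) {Q : ℕ} (hQ : Q ≠ 0) (m m' : ι → ℤ) :
    latticeChar ξ m' =
      𝐞 (-((Q • ξ) ⬝ᵥ fun i => ((m' i - m i : ℤ) : ℝ) / Q)) * latticeChar ξ m := by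
  rw [latticeChar_apply, latticeChar_apply, ← AddChar.map_add_eq_mul]
  simp only [dotProduct, Pi.smul_apply, nsmul_eq_mul, ← neg_add, ← Finset.sum_add_distrib]
  congr 2
  refine Finset.sum_congr rfl fun i _ => ?_
  push_cast
  field_simp
  ring

theorem IsLpMultiplier.fractionalShift_of_abs_le_one (hp : 1 ≤ p) (hΞ : AEMeasurable Ξ ν)
    {c : ι → ℝ} (hc : ∀ᵐ ω ∂ν, ∀ i, |Ξ ω i - c i| ≤ 1 / (16 * Fintype.card ι)) {β : ι → ℝ}
    (hβ : ∀ i, |β i| ≤ 1) :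
    IsLpMultiplier p (fun ω => latticeChar (Ξ ω)) ν (fun ω => (𝐞 (-(Ξ ω ⬝ᵥ β)) : ℂ)) 2 := by
  obtain hι | hι := isEmpty_or_nonempty ι
  · simp only [dotProduct, Finset.univ_eq_empty, Finset.sum_empty, neg_zero,
      AddChar.map_zero_eq_one]
    exact (const _).mono (by norm_num [Circle.norm_coe])
  refine (fractionalShift (L := 4 * Fintype.card ι) hp hΞ (by positivity) (c := c)
    (hc.mono fun ω hω i => (hω i).trans_eq ?_) β).mono ?_
  · push_cast
    ring
  · rw [Real.toNNReal_le_iff_le_coe, NNReal.coe_ofNat, ← Real.le_log_iff_exp_le two_pos]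
    calc 2 * π / (3 * (4 * Fintype.card ι : ℕ)) * ∑ i, |β i|
        ≤ 2 * π / (3 * (4 * Fintype.card ι : ℕ)) * ∑ _i : ι, 1 := by gcongr; exact hβ _
      _ = π / 6 := by
        simp only [Finset.sum_const, Finset.card_univ, nsmul_eq_mul, mul_one]
        push_cast
        field_simp
        norm_num
      _ ≤ Real.log 2 := by linarith [Real.pi_lt_d2, Real.log_two_gt_d9]

theorem eLpNorm_charIntegral_sample_le (hp : 1 ≤ p) (hΞ : AEMeasurable Ξ ν) {Q : ℕ} (hQ : Q ≠ 0)
    {c : ι → ℝ} (hc : ∀ᵐ ω ∂ν, ∀ i, |Q * Ξ ω i - c i| ≤ 1 / (16 * Fintype.card ι)) {F : Ω → ℂ}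
    (hF : Integrable F ν) {m m' : ι → ℤ} (hm : ∀ i, |m' i - m i| ≤ Q) :
    eLpNorm (fun x => charIntegral (fun ω => latticeChar (Ξ ω)) ν F (Q • x + m')) p count ≤
      2 * eLpNorm (fun x => charIntegral (fun ω => latticeChar (Ξ ω)) ν F (Q • x + m)) p
        count := by
  set β : ι → ℝ := fun i => ((m' i - m i : ℤ) : ℝ) / Q with hβ
  have hβ_le (i : ι) : |β i| ≤ 1 := by
    rw [hβ, abs_div, Nat.abs_cast]
    exact div_le_one_of_le₀ (mod_cast hm i) (Nat.cast_nonneg Q)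
  have hshift := IsLpMultiplier.fractionalShift_of_abs_le_one (p := p) hp (hΞ.const_smul Q)
    (hc.mono fun ω hω i => by simpa only [Pi.smul_apply, nsmul_eq_mul] using hω i) hβ_le
  have hmul : (fun ω => (latticeChar (Ξ ω) m' : ℂ) * F ω) =
      (fun ω => (𝐞 (-((Q • Ξ ω) ⬝ᵥ β)) : ℂ)) * fun ω => latticeChar (Ξ ω) m * F ω := by
    funext ω
    rw [Pi.mul_apply, ← mul_assoc, ← Circle.coe_mul,
      ← latticeChar_eq_fractionalShift_mul (Ξ ω) hQ m m']
  simp only [charIntegral_nsmul_add, hmul]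
  exact hshift.eLpNorm_le _ (integrable_char_mul (aestronglyMeasurable_latticeChar hΞ) m hF)

end Lattice

section Residues

theorem abs_add_residue_sub_le {ι : Type*} {Q : ℕ} (m : ι → ℤ) (r : ι → Fin Q) (i : ι) :
    |(m + fun i => ((r i : ℕ) : ℤ)) i - m i| ≤ Q := by
  rw [Pi.add_apply, add_sub_cancel_left, Nat.abs_cast]
  exact mod_cast (r i).2.le

variable {ι E : Type*} [Fintype ι] [NormedAddCommGroup E]

theorem tsum_eq_sum_tsum_nsmul_add [DecidableEq ι] (Q : ℕ) [NeZero Q] (m : ι → ℤ)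
    (g : (ι → ℤ) → ℝ≥0∞) :
    ∑' x, g x = ∑ r : ι → Fin Q, ∑' x : ι → ℤ, g (Q • x + (m + fun i => ((r i : ℕ) : ℤ))) := by
  let e : (ι → ℤ) ≃ (ι → ℤ) × (ι → Fin Q) :=
    (Equiv.piCongrRight fun _ => Int.divModEquiv Q).trans (Equiv.arrowProdEquivProdArrow _ _ _)
  rw [← (Equiv.addRight m).tsum_eq g, ← e.symm.tsum_eq, ENNReal.tsum_prod', ENNReal.tsum_comm,
    tsum_fintype]
  refine Finset.sum_congr rfl fun r _ => tsum_congr fun x => congrArg g (funext fun i => ?_)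
  simp only [e, Equiv.arrowProdEquivProdArrow, Int.divModEquiv, Equiv.symm_trans_apply,
    Equiv.coe_fn_symm_mk, Equiv.piCongrRight_symm_apply, Equiv.coe_addRight, Pi.add_apply,
    Pi.smul_apply, Pi.map_apply]
  rw [nsmul_eq_mul]
  ring

theorem eLpNorm_count {α : Type*} [MeasurableSpace α] [MeasurableSingletonClass α] {p : ℝ≥0∞}
    (hp0 : p ≠ 0) (hp : p ≠ ∞) (g : α → E) :
    eLpNorm g p count = (∑' x, ‖g x‖ₑ ^ p.toReal) ^ (1 / p.toReal) := by
  rw [eLpNorm_eq_lintegral_rpow_enorm_toReal hp0 hp, lintegral_count]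

theorem eLpNorm_eq_sum_residues [DecidableEq ι] {p : ℝ≥0∞} (hp0 : p ≠ 0) (hp : p ≠ ∞) (Q : ℕ)
    [NeZero Q] (m : ι → ℤ) (g : (ι → ℤ) → E) :
    eLpNorm g p count = (∑ r : ι → Fin Q, eLpNorm (fun x : ι → ℤ =>
      g (Q • x + (m + fun i => ((r i : ℕ) : ℤ)))) p count ^ p.toReal) ^ (1 / p.toReal) := by
  have hp' : p.toReal ≠ 0 := (ENNReal.toReal_pos hp0 hp).ne'
  simp only [eLpNorm_count hp0 hp, ← ENNReal.rpow_mul, one_div_mul_cancel hp', ENNReal.rpow_one]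
  rw [tsum_eq_sum_tsum_nsmul_add Q m]

theorem rpow_neg_mul_sum_const [DecidableEq ι] {t : ℝ} (ht : 0 < t) (Q : ℕ) [NeZero Q] (a : ℝ≥0∞) :
    (Q : ℝ≥0∞) ^ (-(Fintype.card ι : ℝ) / t) * (∑ _r : ι → Fin Q, a ^ t) ^ (1 / t) = a := by
  rw [Finset.sum_const, Finset.card_univ, Fintype.card_fun, Fintype.card_fin, nsmul_eq_mul,
    ENNReal.mul_rpow_of_nonneg _ _ (by positivity), ← ENNReal.rpow_mul, mul_one_div_cancel ht.ne',
    ENNReal.rpow_one, Nat.cast_pow, ← ENNReal.rpow_natCast, ← ENNReal.rpow_mul, ← mul_assoc,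
    ← ENNReal.rpow_add _ _ (Nat.cast_ne_zero.2 (NeZero.ne Q)) (ENNReal.natCast_ne_top Q),
    mul_one_div, ← add_div, neg_add_cancel, zero_div, ENNReal.rpow_zero, one_mul]

variable {p C : ℝ≥0∞} {Q : ℕ} [NeZero Q] {g : (ι → ℤ) → E}

theorem rpow_neg_mul_eLpNorm_le_sample (hp0 : p ≠ 0) (hp : p ≠ ∞)
    (hg : ∀ m m' : ι → ℤ, (∀ i, |m' i - m i| ≤ Q) →
      eLpNorm (fun x => g (Q • x + m')) p count ≤ C * eLpNorm (fun x => g (Q • x + m)) p count)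
    (m : ι → ℤ) :
    (Q : ℝ≥0∞) ^ (-(Fintype.card ι : ℝ) / p.toReal) * eLpNorm g p count ≤
      C * eLpNorm (fun x => g (Q • x + m)) p count := by
  classical
  rw [eLpNorm_eq_sum_residues hp0 hp Q m,
    ← rpow_neg_mul_sum_const (ι := ι) (ENNReal.toReal_pos hp0 hp) Q (C * _)]
  gcongr with r
  exact hg _ _ (abs_add_residue_sub_le m r)

theorem eLpNorm_sample_le_rpow_neg_mul (hp0 : p ≠ 0) (hp : p ≠ ∞)
    (hg : ∀ m m' : ι → ℤ, (∀ i, |m' i - m i| ≤ Q) →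
      eLpNorm (fun x => g (Q • x + m')) p count ≤ C * eLpNorm (fun x => g (Q • x + m)) p count)
    (m : ι → ℤ) :
    eLpNorm (fun x => g (Q • x + m)) p count ≤
      C * (Q : ℝ≥0∞) ^ (-(Fintype.card ι : ℝ) / p.toReal) * eLpNorm g p count := by
  classical
  have ht := ENNReal.toReal_pos hp0 hp
  calc eLpNorm (fun x => g (Q • x + m)) p count
      = (Q : ℝ≥0∞) ^ (-(Fintype.card ι : ℝ) / p.toReal) * (∑ _r : ι → Fin Q,
          eLpNorm (fun x => g (Q • x + m)) p count ^ p.toReal) ^ (1 / p.toReal) :=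
        (rpow_neg_mul_sum_const ht Q _).symm
    _ ≤ (Q : ℝ≥0∞) ^ (-(Fintype.card ι : ℝ) / p.toReal) * (∑ r : ι → Fin Q,
          (C * eLpNorm (fun x : ι → ℤ => g (Q • x + (m + fun i => ((r i : ℕ) : ℤ)))) p count) ^
            p.toReal) ^ (1 / p.toReal) := by
        gcongr with r
        exact hg _ _ fun i => abs_sub_comm (m i) _ ▸ abs_add_residue_sub_le m r i
    _ = C * (Q : ℝ≥0∞) ^ (-(Fintype.card ι : ℝ) / p.toReal) * eLpNorm g p count := by
        simp only [ENNReal.mul_rpow_of_nonneg _ _ ht.le, ← Finset.mul_sum]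
        rw [ENNReal.mul_rpow_of_nonneg _ _ (by positivity), ← ENNReal.rpow_mul,
          mul_one_div_cancel ht.ne', ENNReal.rpow_one, ← eLpNorm_eq_sum_residues hp0 hp Q m,
          mul_left_comm, mul_assoc]

end Residues

section BandPiece

variable {d : ℕ}

theorem continuous_discFourier {f : (Fin d → ℤ) → ℂ} (hf : Summable f) :
    Continuous (discFourier d f) := by
  refine continuous_tsum (fun y => by fun_prop) hf.norm fun y ξ => ?_
  rw [norm_mul, show 2 * (π : ℂ) * Complex.I * (∑ i, ξ i * (y i : ℝ) : ℝ) =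
    (2 * π * ∑ i, ξ i * (y i : ℝ) : ℝ) * Complex.I by push_cast; ring,
    Complex.norm_exp_ofReal_mul_I, mul_one]

/-- A box in the unit cube of frequencies that contains every point of the cube at which
`ξ ↦ η (R ξ)` is nonzero, if `η` vanishes off the open ball of radius `1 / (8 * d)` and the entries
of `R` are at least `Q`. -/
def lowFrequencies (d : ℕ) (Q : ℝ) : Set (EuclideanSpace ℝ (Fin d)) :=
  {ξ | ∀ i, ξ i ∈ Set.Ico (0 : ℝ) 1 ∧ Q * ξ i ≤ 1 / (8 * d)}

theorem measurableSet_lowFrequencies (Q : ℝ) : MeasurableSet (lowFrequencies d Q) := by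
  unfold lowFrequencies
  measurability

theorem integrableOn_lowFrequencies {F : EuclideanSpace ℝ (Fin d) → ℂ} (hF : Continuous F)
    (Q : ℝ) : IntegrableOn F (lowFrequencies d Q) := by
  have hcube : IsCompact (WithLp.toLp 2 '' Set.Icc (0 : Fin d → ℝ) 1) :=
    isCompact_Icc.image (by fun_prop)
  refine (hF.continuousOn.integrableOn_compact hcube).mono_set fun ξ hξ => ?_
  exact ⟨WithLp.ofLp ξ, ⟨fun i => (hξ i).1.1, fun i => (hξ i).1.2.le⟩, rfl⟩

theorem abs_sub_le_of_mem_lowFrequencies {Q : ℝ} (hQ : 0 ≤ Q) {ξ : EuclideanSpace ℝ (Fin d)}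
    (hξ : ξ ∈ lowFrequencies d Q) (i : Fin d) :
    |Q * ξ i - 1 / (16 * d)| ≤ 1 / (16 * d) := by
  have hpos : 0 ≤ Q * ξ i := mul_nonneg hQ (hξ i).1.1
  have hle := (hξ i).2
  rw [show (1 : ℝ) / (8 * d) = 1 / (16 * d) + 1 / (16 * d) by ring] at hle
  exact abs_le.2 ⟨by linarith, by linarith⟩

theorem bandPiece_eq_charIntegral {η : EuclideanSpace ℝ (Fin d) → ℝ}
    (hη0 : ∀ x : EuclideanSpace ℝ (Fin d), 1 / (8 * d) ≤ ‖x‖ → η x = 0) {R : Fin d → ℝ} {Q : ℝ}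
    (hR : ∀ i, Q ≤ R i) (f : (Fin d → ℤ) → ℂ) :
    bandPiece d η R f = charIntegral (fun ξ : EuclideanSpace ℝ (Fin d) => latticeChar ξ.ofLp)
      (volume.restrict (lowFrequencies d Q))
      (fun ξ => (η (WithLp.toLp 2 fun i => R i * ξ i) : ℂ) * discFourier d f ξ) := by
  funext x
  have hcube : MeasurableSet {ξ : EuclideanSpace ℝ (Fin d) | ∀ i, ξ i ∈ Set.Ico (0 : ℝ) 1} := by
    measurability
  rw [bandPiece, charIntegral, setIntegral_eq_of_subset_of_forall_sdiff_eq_zero hcube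
    (s := lowFrequencies d Q) fun ξ hξ i => (hξ i).1]
  · refine integral_congr_ae (Eventually.of_forall fun ξ => ?_)
    simp only [latticeChar_apply, Real.fourierChar_apply, dotProduct, mul_assoc]
    congr 2
    push_cast
    ring
  · rintro ξ ⟨hξ, hlow⟩
    obtain ⟨i, hi⟩ : ∃ i, 1 / (8 * d) < Q * ξ i := by
      by_contra! hle
      exact hlow fun i => ⟨hξ i, hle i⟩
    have hnorm : 1 / (8 * d) ≤ ‖WithLp.toLp 2 fun i => R i * ξ i‖ := calc
      (1 : ℝ) / (8 * d) ≤ R i * ξ i := hi.le.trans (by gcongr; exacts [(hξ i).1, hR i])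
      _ ≤ ‖R i * ξ i‖ := Real.le_norm_self _
      _ ≤ ‖WithLp.toLp 2 fun i => R i * ξ i‖ :=
        PiLp.norm_apply_le (WithLp.toLp 2 fun i => R i * ξ i) i
    rw [hη0 _ hnorm, Complex.ofReal_zero, mul_zero, zero_mul]

theorem eLpNorm_bandPiece_sample_le {p : ℝ≥0∞} (hp : 1 ≤ p) {η : EuclideanSpace ℝ (Fin d) → ℝ}
    (hη : Continuous η) (hη0 : ∀ x : EuclideanSpace ℝ (Fin d), 1 / (8 * d) ≤ ‖x‖ → η x = 0)
    {Q : ℕ} (hQ : Q ≠ 0) {R : Fin d → ℝ} (hR : ∀ i, (Q : ℝ) ≤ R i) {f : (Fin d → ℤ) → ℂ}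
    (hf : Summable f) {m m' : Fin d → ℤ} (hm : ∀ i, |m' i - m i| ≤ Q) :
    eLpNorm (fun x => bandPiece d η R f (Q • x + m')) p count ≤
      2 * eLpNorm (fun x => bandPiece d η R f (Q • x + m)) p count := by
  have hF : Continuous fun ξ : EuclideanSpace ℝ (Fin d) =>
      (η (WithLp.toLp 2 fun i => R i * ξ i) : ℂ) * discFourier d f ξ := by
    have := continuous_discFourier hf
    fun_prop
  rw [bandPiece_eq_charIntegral hη0 hR]
  refine eLpNorm_charIntegral_sample_le hp (by fun_prop) hQ (c := fun _ => 1 / (16 * d)) ?_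
    (integrableOn_lowFrequencies hF Q) hm
  refine ae_restrict_of_forall_mem (measurableSet_lowFrequencies _) fun ξ hξ i => ?_
  rw [Fintype.card_fin]
  exact abs_sub_le_of_mem_lowFrequencies Q.cast_nonneg hξ i

end BandPiece

theorem statement10_general (d : ℕ) {η : EuclideanSpace ℝ (Fin d) → ℝ} (hη : Continuous η)
    (hη0 : ∀ x : EuclideanSpace ℝ (Fin d), 1 / (8 * d) ≤ ‖x‖ → η x = 0)
    {p : ℝ} (hp : 1 ≤ p) {Q : ℕ} (hQ : 1 ≤ Q) {R : Fin d → ℝ} (hR : ∀ i, (Q : ℝ) ≤ R i)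
    (m : Fin d → ℤ) {f : (Fin d → ℤ) → ℂ} (hf : Summable f) :
    (1 / 2 : ℝ≥0∞) * (Q : ℝ≥0∞) ^ (-(d : ℝ) / p) *
        (∑' x : Fin d → ℤ, (‖bandPiece d η R f x‖₊ : ℝ≥0∞) ^ p) ^ (1 / p)
      ≤ (∑' x : Fin d → ℤ,
          (‖bandPiece d η R f (fun i => (Q : ℤ) * x i + m i)‖₊ : ℝ≥0∞) ^ p) ^ (1 / p) ∧
    (∑' x : Fin d → ℤ,
        (‖bandPiece d η R f (fun i => (Q : ℤ) * x i + m i)‖₊ : ℝ≥0∞) ^ p) ^ (1 / p)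
      ≤ 2 * (Q : ℝ≥0∞) ^ (-(d : ℝ) / p) *
        (∑' x : Fin d → ℤ, (‖bandPiece d η R f x‖₊ : ℝ≥0∞) ^ p) ^ (1 / p) := by
  have : NeZero Q := ⟨by lia⟩
  have hp1 : 1 ≤ ENNReal.ofReal p := ENNReal.one_le_ofReal.2 hp
  have hp0 : ENNReal.ofReal p ≠ 0 := (one_pos.trans_le hp1).ne'
  have hpt : (ENNReal.ofReal p).toReal = p := ENNReal.toReal_ofReal (by linarith)
  have hnorm (g : (Fin d → ℤ) → ℂ) :
      (∑' x, (‖g x‖₊ : ℝ≥0∞) ^ p) ^ (1 / p) = eLpNorm g (ENNReal.ofReal p) count := by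
    rw [eLpNorm_count hp0 ENNReal.ofReal_ne_top, hpt]
    rfl
  have hcomparable (m m' : Fin d → ℤ) := eLpNorm_bandPiece_sample_le (m := m) (m' := m') hp1 hη
    hη0 (NeZero.ne Q) hR hf
  have hlower := rpow_neg_mul_eLpNorm_le_sample hp0 ENNReal.ofReal_ne_top hcomparable m
  have hupper := eLpNorm_sample_le_rpow_neg_mul hp0 ENNReal.ofReal_ne_top hcomparable m
  rw [hpt, Fintype.card_fin] at hlower hupper
  rw [hnorm, hnorm, mul_assoc, one_div, ENNReal.inv_mul_le_iff two_ne_zero ENNReal.ofNat_ne_top]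
  simpa only [nsmul_eq_mul] using ⟨hlower, hupper⟩

/-- **Sampling lemma (Lemma 3).**  If every diagonal entry of `R` is `≥ h ≥ 2Q^{d+1}` then for
every residue `m ∈ {1,…,Q}^d` the `ℓ^p` norm of `g = ℱ^{−1}(η(R·)f̂)` sampled along
`Qℤ^d + m` is comparable to `Q^{−d/p}` times its full `ℓ^p` norm, with constants `1/2, 2`
independent of `Q`, `h`, `m` and `f`. -/
theorem statement10 (d : ℕ) (η φ ψ : EuclideanSpace ℝ (Fin d) → ℝ)
    (hφsm : ContDiff ℝ (⊤ : ℕ∞) φ) (hψsm : ContDiff ℝ (⊤ : ℕ∞) ψ)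
    (hφ0 : ∀ x, 0 ≤ φ x) (hψ0 : ∀ x, 0 ≤ ψ x)
    (hφsupp : ∀ x : EuclideanSpace ℝ (Fin d), φ x ≠ 0 → ∀ i, |x i| < 1 / (8 * d))
    (hψsupp : ∀ x : EuclideanSpace ℝ (Fin d), ψ x ≠ 0 → ∀ i, |x i| < 1 / (8 * d))
    (hφc : HasCompactSupport φ) (hψc : HasCompactSupport ψ)
    (hconv : ∀ x, η x = ∫ t, φ t * ψ (x - t))
    (hη01 : ∀ x, 0 ≤ η x ∧ η x ≤ 1) (hηsm : ContDiff ℝ (⊤ : ℕ∞) η)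
    (hη1 : ∀ x : EuclideanSpace ℝ (Fin d), ‖x‖ ≤ 1 / (16 * d) → η x = 1)
    (hη0 : ∀ x : EuclideanSpace ℝ (Fin d), 1 / (8 * d) ≤ ‖x‖ → η x = 0)
    (p : ℝ) (hp : 1 ≤ p) (Q : ℕ) (hQ : 1 ≤ Q)
    (h : ℝ) (hQh : 2 * (Q : ℝ) ^ (d + 1) ≤ h) (R : Fin d → ℝ) (hR : ∀ i, h ≤ R i)
    (m : Fin d → ℤ) (hm : ∀ i, 1 ≤ m i ∧ m i ≤ (Q : ℤ))
    (f : (Fin d → ℤ) → ℂ) (hf : (Function.support f).Finite) :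
    (1 / 2 : ℝ≥0∞) * (Q : ℝ≥0∞) ^ (-(d : ℝ) / p) *
        (∑' x : Fin d → ℤ, (‖bandPiece d η R f x‖₊ : ℝ≥0∞) ^ p) ^ (1 / p)
      ≤ (∑' x : Fin d → ℤ,
          (‖bandPiece d η R f (fun i => (Q : ℤ) * x i + m i)‖₊ : ℝ≥0∞) ^ p) ^ (1 / p) ∧
    (∑' x : Fin d → ℤ,
        (‖bandPiece d η R f (fun i => (Q : ℤ) * x i + m i)‖₊ : ℝ≥0∞) ^ p) ^ (1 / p)
      ≤ 2 * (Q : ℝ≥0∞) ^ (-(d : ℝ) / p) *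
        (∑' x : Fin d → ℤ, (‖bandPiece d η R f x‖₊ : ℝ≥0∞) ^ p) ^ (1 / p) := by
  refine statement10_general d hηsm.continuous hη0 hp hQ (fun i => ?_) m
    (summable_of_hasFiniteSupport hf)
  have hQpow : (Q : ℝ) ≤ Q ^ (d + 1) := le_self_pow₀ (mod_cast hQ) d.succ_ne_zero
  linarith [hR i, Q.cast_nonneg (α := ℝ)]

end
end

section
/- For all k, N ∈ ℕ with N ≥ k there exists a family of at most ⌈(k^{k+1}/k!)·log(eN/k)⌉ + 1 partitions of {1,…,N} with the following properties: (i) each partition in the family consists of k pairwise disjoint nonempty subsets N₁,…,N_k with {1,…,N} = N₁ ∪ ⋯ ∪ N_k; (ii) for every subset E ⊆ {1,…,N} with at least k elements there is a partition {N₁,…,N_k} in the family such that E ∩ N_j ≠ ∅ for every j = 1,…,k. In particular, for every k there is a constant C_k > 0 independent of N such that at most C_k · log(N+1) partitions suffice. -/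
/-!
Color an `N`-element set uniformly at random with `k` colors. A fixed `k`-subset receives all the
colors with probability `p = k! / k ^ k`, so `r` independent colorings all fail on it with
probability `(1 - p) ^ r ≤ exp (-p r)`. There are `choose N k ≤ (e N / k) ^ k` such subsets, and by
the union bound some `r` colorings serve all of them as soon as `k log (e N / k) < p r`. A coloring
that omits a color serves no subset, so it may be replaced by a surjective one; the color classes
are then the blocks of the partitions.
-/

section ColoringFamily

open Finset

variable {α ι : Type*}

theorem exists_family_forall_exists_notMem {R X Y T : Type*} [CommSemiring R] [LinearOrder R]
    [IsStrictOrderedRing R] [Fintype X] [Nonempty X] [Fintype T] {U : Finset Y}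
    {bad : Y → Finset X} {q : R} (hbad : ∀ y ∈ U, (#(bad y) : R) ≤ q * Fintype.card X)
    (hU : #U * q ^ Fintype.card T < 1) :
    ∃ F : T → X, ∀ y ∈ U, ∃ t, F t ∉ bad y := by
  classical
  by_contra! hall
  have hcover : (univ : Finset (T → X)) ⊆ U.biUnion fun y ↦ Fintype.piFinset fun _ ↦ bad y :=
    fun F _ ↦ by simpa using hall F
  have hcard : Fintype.card X ^ Fintype.card T ≤ ∑ y ∈ U, #(bad y) ^ Fintype.card T := by
    simpa using (card_le_card hcover).trans card_biUnion_le
  refine lt_irrefl ((Fintype.card X : R) ^ Fintype.card T) ?_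
  calc (Fintype.card X : R) ^ Fintype.card T
      ≤ ∑ y ∈ U, (#(bad y) : R) ^ Fintype.card T := mod_cast hcard
    _ ≤ ∑ _y ∈ U, (q * Fintype.card X) ^ Fintype.card T :=
        sum_le_sum fun y hy ↦ pow_le_pow_left₀ (Nat.cast_nonneg _) (hbad y hy) _
    _ = #U * q ^ Fintype.card T * (Fintype.card X : R) ^ Fintype.card T := by
        rw [sum_const, nsmul_eq_mul, mul_pow, mul_assoc]
    _ < (Fintype.card X : R) ^ Fintype.card T :=
        mul_lt_of_lt_one_left (pow_pos (Nat.cast_pos.2 Fintype.card_pos) _) hU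

section Counting

variable [Fintype ι] [DecidableEq ι]

theorem surjective_of_image_eq_univ {f : α → ι} {E : Finset α} (h : E.image f = univ) :
    f.Surjective := fun j ↦ by
  obtain ⟨x, -, hx⟩ := mem_image.1 (h ▸ mem_univ j)
  exact ⟨x, hx⟩

variable [Fintype α]

theorem card_surjective_of_card_eq [DecidableEq α] (h : Fintype.card α = Fintype.card ι) :
    Fintype.card {f : α → ι // f.Surjective} = (Fintype.card ι).factorial := by
  have hinj (f : α → ι) : f.Surjective ↔ f.Injective :=
    (Finite.injective_iff_surjective_of_equiv (Fintype.equivOfCardEq h)).symm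
  rw [Fintype.card_congr ((Equiv.subtypeEquivRight hinj).trans
    (Equiv.subtypeInjectiveEquivEmbedding α ι)), Fintype.card_embedding_eq, h,
    Nat.descFactorial_self]

theorem card_image_eq_univ [DecidableEq α] {E : Finset α} (hE : #E = Fintype.card ι) :
    #{f : α → ι | E.image f = univ} =
      (Fintype.card ι).factorial * Fintype.card ι ^ (Fintype.card α - Fintype.card ι) := by
  have hsurj (f : α → ι) :
      E.image f = univ ↔ Function.Surjective fun x : {x // x ∈ E} ↦ f x := by
    simp [eq_univ_iff_forall, Function.Surjective]
  let restrict : {f : α → ι // E.image f = univ} ≃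
      {g : {x // x ∈ E} → ι // g.Surjective} × ({x // x ∉ E} → ι) :=
    ((Equiv.piEquivPiSubtypeProd (· ∈ E) fun _ ↦ ι).subtypeEquiv hsurj).trans
      Equiv.prodSubtypeFstEquivSubtypeProd
  rw [← Fintype.card_subtype, Fintype.card_congr restrict, Fintype.card_prod,
    card_surjective_of_card_eq (by simpa using hE)]
  simp [Fintype.card_subtype_compl, hE]

theorem card_image_ne_univ [DecidableEq α] {E : Finset α} (hE : #E = Fintype.card ι) :
    (#{f : α → ι | E.image f ≠ univ} : ℝ) =
      (1 - (Fintype.card ι).factorial / (Fintype.card ι : ℝ) ^ Fintype.card ι) *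
        Fintype.card (α → ι) := by
  obtain ⟨m, hm⟩ := Nat.exists_eq_add_of_le (hE ▸ card_le_univ E)
  have htotal := card_filter_add_card_filter_not (s := univ) fun f : α → ι ↦ E.image f = univ
  rw [card_image_eq_univ hE, card_univ] at htotal
  have hbad : (#{f : α → ι | E.image f ≠ univ} : ℝ) = Fintype.card (α → ι) -
      (Fintype.card ι).factorial * Fintype.card ι ^ (Fintype.card α - Fintype.card ι) :=
    eq_sub_of_add_eq' (mod_cast htotal)
  rw [hbad, Fintype.card_fun, hm, Nat.add_sub_cancel_left]
  push_cast
  simp only [pow_add]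
  field_simp

theorem exists_colorings_image_eq_univ {T : Type*} [Fintype T] [Nonempty ι]
    (h : (Fintype.card α).choose (Fintype.card ι) *
      (1 - (Fintype.card ι).factorial / (Fintype.card ι : ℝ) ^ Fintype.card ι) ^
        Fintype.card T < 1) :
    ∃ F : T → α → ι, ∀ E : Finset α, Fintype.card ι ≤ #E → ∃ t, E.image (F t) = univ := by
  classical
  obtain ⟨F, hF⟩ := exists_family_forall_exists_notMem (T := T)
    (U := powersetCard (Fintype.card ι) (univ : Finset α))
    (bad := fun E ↦ {f : α → ι | E.image f ≠ univ})
    (fun E hE ↦ (card_image_ne_univ (mem_powersetCard_univ.1 hE)).le)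
    (by rwa [card_powersetCard, card_univ])
  refine ⟨F, fun E hE ↦ ?_⟩
  obtain ⟨E', hE'E, hE'⟩ := exists_subset_card_eq hE
  obtain ⟨t, ht⟩ := hF E' (mem_powersetCard_univ.2 hE')
  replace ht : E'.image (F t) = univ := by simpa using ht
  exact ⟨t, univ_subset_iff.1 (ht ▸ image_subset_image hE'E)⟩

theorem exists_surjective_colorings_image_eq_univ {T : Type*} [Fintype T] [Nonempty ι]
    (hια : Fintype.card ι ≤ Fintype.card α)
    (h : (Fintype.card α).choose (Fintype.card ι) *
      (1 - (Fintype.card ι).factorial / (Fintype.card ι : ℝ) ^ Fintype.card ι) ^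
        Fintype.card T < 1) :
    ∃ F : T → α → ι, (∀ t, (F t).Surjective) ∧
      ∀ E : Finset α, Fintype.card ι ≤ #E → ∃ t, E.image (F t) = univ := by
  classical
  obtain ⟨F, hF⟩ := exists_colorings_image_eq_univ (T := T) h
  obtain ⟨t₀, ht₀⟩ := hF univ hια
  refine ⟨fun t ↦ if (F t).Surjective then F t else F t₀, fun t ↦ ?_, fun E hE ↦ ?_⟩
  · beta_reduce
    split_ifs with ht
    exacts [ht, surjective_of_image_eq_univ ht₀]
  · obtain ⟨t, ht⟩ := hF E hE
    exact ⟨t, by simpa only [if_pos (surjective_of_image_eq_univ ht)]⟩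

end Counting

section Estimates

open Real

theorem choose_le_exp_one_mul_div_pow (n k : ℕ) :
    (n.choose k : ℝ) ≤ (exp 1 * n / k) ^ k := by
  obtain rfl | hk := k.eq_zero_or_pos
  · simp
  have hfact : (k : ℝ) ^ k / k.factorial ≤ exp 1 ^ k := by
    simpa [← exp_nat_mul] using pow_div_factorial_le_exp (k : ℝ) k.cast_nonneg k
  calc (n.choose k : ℝ) ≤ (n : ℝ) ^ k / k.factorial := Nat.choose_le_pow_div k n
    _ = (k : ℝ) ^ k / k.factorial * ((n : ℝ) / k) ^ k := by rw [div_pow]; field_simp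
    _ ≤ exp 1 ^ k * ((n : ℝ) / k) ^ k := by gcongr
    _ = (exp 1 * n / k) ^ k := by rw [← mul_pow, mul_div_assoc]

theorem mul_one_sub_pow_lt_one {L M p : ℝ} {r : ℕ} (hM : M ≤ exp L) (hp : p ≤ 1)
    (hL : L < p * r) : M * (1 - p) ^ r < 1 := by
  have hpow : (1 - p) ^ r ≤ exp (-(p * r)) :=
    calc (1 - p) ^ r ≤ exp (-p) ^ r :=
          pow_le_pow_left₀ (sub_nonneg.2 hp) (one_sub_le_exp_neg p) r
      _ = exp (-(p * r)) := by rw [← exp_nat_mul]; ring_nf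
  calc M * (1 - p) ^ r ≤ exp L * exp (-(p * r)) :=
        mul_le_mul hM hpow (pow_nonneg (sub_nonneg.2 hp) r) (exp_pos L).le
    _ = exp (L - p * r) := by rw [← exp_add, sub_eq_add_neg]
    _ < 1 := exp_lt_one_iff.2 (sub_neg.2 hL)

theorem choose_mul_one_sub_factorial_div_pow_lt_one {n k r : ℕ} (hn : n ≠ 0) (hk : k ≠ 0)
    (hr : (k : ℝ) ^ (k + 1) / k.factorial * log (exp 1 * n / k) < r) :
    n.choose k * (1 - k.factorial / (k : ℝ) ^ k) ^ r < 1 := by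
  have hp : (0 : ℝ) < k.factorial / (k : ℝ) ^ k := by positivity
  refine mul_one_sub_pow_lt_one (L := k * log (exp 1 * n / k)) ?_ ?_ ?_
  · rw [exp_nat_mul, exp_log (by positivity)]
    exact choose_le_exp_one_mul_div_pow n k
  · exact div_le_one_of_le₀ (mod_cast k.factorial_le_pow) (by positivity)
  · calc k * log (exp 1 * n / k)
        = k.factorial / (k : ℝ) ^ k *
            ((k : ℝ) ^ (k + 1) / k.factorial * log (exp 1 * n / k)) := by rw [pow_succ]; field_simp
      _ < k.factorial / (k : ℝ) ^ k * r := mul_lt_mul_of_pos_left hr hp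

end Estimates

section ColorClass

variable {s : Finset α} [DecidableEq ι] (f : s → ι)

/-- The `j`-th color class of a coloring `f` of the finite set `s`, i.e. the fiber of `f` over `j`,
regarded as a finite set in the ambient type of `s`. The color classes of a surjective coloring are
the blocks of a partition of `s`. -/
def colorClass (j : ι) : Finset α :=
  ({x | f x = j} : Finset s).map (Function.Embedding.subtype (· ∈ s))

variable {f}

theorem mem_colorClass {j : ι} {x : α} :
    x ∈ colorClass f j ↔ ∃ hx : x ∈ s, f ⟨x, hx⟩ = j := by
  simp [colorClass]

theorem colorClass_nonempty (hf : f.Surjective) (j : ι) : (colorClass f j).Nonempty := by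
  obtain ⟨x, hx⟩ := hf j
  exact ⟨x, mem_colorClass.2 ⟨x.2, hx⟩⟩

variable (f) in
theorem pairwiseDisjoint_colorClass : (Set.univ : Set ι).PairwiseDisjoint (colorClass f) := by
  refine fun i _ j _ hij ↦ disjoint_left.2 fun x hxi hxj ↦ hij ?_
  obtain ⟨_, rfl⟩ := mem_colorClass.1 hxi
  obtain ⟨_, rfl⟩ := mem_colorClass.1 hxj
  rfl

variable [DecidableEq α] [Fintype ι]

variable (f) in
theorem biUnion_colorClass : univ.biUnion (colorClass f) = s := by
  ext x
  simp [mem_colorClass]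

theorem inter_colorClass_nonempty {E : Finset α} (hE : (E.subtype (· ∈ s)).image f = univ)
    (j : ι) : (E ∩ colorClass f j).Nonempty := by
  obtain ⟨x, hxE, hxj⟩ := mem_image.1 (hE ▸ mem_univ j)
  exact ⟨x, mem_inter.2 ⟨mem_subtype.1 hxE, mem_colorClass.2 ⟨x.2, hxj⟩⟩⟩

end ColorClass

theorem statement12_general [DecidableEq α] (s : Finset α) (k : ℕ) (hk : 1 ≤ k) (hks : k ≤ #s) :
    ∃ (r : ℕ) (π : Fin r → Fin k → Finset α),
      r ≤ ⌈(k : ℝ) ^ (k + 1) / k.factorial * Real.log (Real.exp 1 * #s / k)⌉₊ + 1 ∧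
      (∀ a : Fin r,
        (∀ j, (π a j).Nonempty) ∧
        (Set.univ : Set (Fin k)).PairwiseDisjoint (π a) ∧
        univ.biUnion (π a) = s) ∧
      (∀ E ⊆ s, k ≤ #E → ∃ a : Fin r, ∀ j : Fin k, (E ∩ π a j).Nonempty) := by
  set x := (k : ℝ) ^ (k + 1) / k.factorial * Real.log (Real.exp 1 * #s / k)
  have : Nonempty (Fin k) := ⟨⟨0, hk⟩⟩
  have hr : x < (⌈x⌉₊ + 1 : ℕ) := Nat.lt_of_ceil_lt (Nat.lt_succ_self _)
  have hbound := choose_mul_one_sub_factorial_div_pow_lt_one (by omega) (by omega) hr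
  obtain ⟨F, hsurj, hF⟩ := exists_surjective_colorings_image_eq_univ
    (α := s) (ι := Fin k) (T := Fin (⌈x⌉₊ + 1)) (by simpa using hks) (by simpa using hbound)
  refine ⟨⌈x⌉₊ + 1, fun a ↦ colorClass (F a), le_rfl, fun a ↦ ⟨colorClass_nonempty (hsurj a),
    pairwiseDisjoint_colorClass (F a), biUnion_colorClass (F a)⟩, fun E hEs hE ↦ ?_⟩
  have hcard : #(E.subtype (· ∈ s)) = #E := by
    rw [card_subtype, filter_true_of_mem hEs]
  obtain ⟨a, ha⟩ := hF (E.subtype (· ∈ s)) (by simpa [hcard] using hE)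
  exact ⟨a, inter_colorClass_nonempty ha⟩

end ColoringFamily

/-- **Partition lemma (Lemma 31).** For `1 ≤ k ≤ N` there is a family of at most
`⌈(k^{k+1}/k!)·log(eN/k)⌉ + 1` partitions of `{1,…,N}` into `k` pairwise disjoint nonempty
subsets such that every `E ⊆ {1,…,N}` with at least `k` elements meets every block of at
least one partition in the family. -/
theorem statement12 (k N : ℕ) (hk : 1 ≤ k) (hkN : k ≤ N) :
    ∃ (r : ℕ) (π : Fin r → Fin k → Finset ℕ),
      r ≤ ⌈((k : ℝ) ^ (k + 1) / (Nat.factorial k : ℝ)) *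
            Real.log (Real.exp 1 * (N : ℝ) / (k : ℝ))⌉₊ + 1 ∧
      (∀ a : Fin r,
        (∀ j, (π a j).Nonempty) ∧
        (Set.univ : Set (Fin k)).PairwiseDisjoint (fun j => π a j) ∧
        Finset.univ.biUnion (π a) = Finset.Icc 1 N) ∧
      (∀ E : Finset ℕ, E ⊆ Finset.Icc 1 N → k ≤ E.card →
        ∃ a : Fin r, ∀ j : Fin k, (E ∩ π a j).Nonempty) := by
  simpa using statement12_general (Finset.Icc 1 N) k hk (by simpa using hkN)
end

section
/- For every ρ > 0 there exists a constant C_ρ > 0 such that for every N ∈ ℕ the set 𝒰_N can be written as a disjoint union of at most C_ρ · log(N+2) sets 𝒰_N^i = R(P_N^i), where P_N^i = { q = Q·w : Q divides Q₀ and w ∈ Λ_i } and each Λ_i ⊆ Π(ℙ_N) ∪ {1} has the O property. -/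
noncomputable section

/-- `D = ⌊2/ρ⌋ + 1`. -/
def DIW (ρ : ℝ) : ℕ := ⌊2 / ρ⌋₊ + 1

/-- `N₀ = ⌊N^{ρ/2}⌋ + 1`. -/
def NzeroIW (ρ : ℝ) (N : ℕ) : ℕ := ⌊(N : ℝ) ^ (ρ / 2)⌋₊ + 1

/-- `Q₀ = (N₀!)^D`. -/
def QzeroIW (ρ : ℝ) (N : ℕ) : ℕ := (Nat.factorial (NzeroIW ρ N)) ^ (DIW ρ)

/-- `ℙ_N`, the primes `p` with `N₀ < p ≤ N`. -/
def primesIW (ρ : ℝ) (N : ℕ) : Set ℕ := {p | p.Prime ∧ NzeroIW ρ N < p ∧ p ≤ N}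

/-- `Π(V)`: all products of at most `D` distinct prime factors from `V`, at powers
between `1` and `D`. -/
def PiProdIW (D : ℕ) (V : Set ℕ) : Set ℕ :=
  {w | ∃ k : ℕ, 1 ≤ k ∧ k ≤ D ∧
    ∃ p γ : Fin k → ℕ, (∀ l, p l ∈ V) ∧ Function.Injective p ∧
      (∀ l, 1 ≤ γ l ∧ γ l ≤ D) ∧ w = ∏ l, p l ^ γ l}

/-- `A_q = {a ∈ {1,…,q}^d : gcd(q, gcd(a₁,…,a_d)) = 1}`. -/
def AqIW (d q : ℕ) : Set (Fin d → ℕ) :=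
  {a | (∀ i, 1 ≤ a i ∧ a i ≤ q) ∧ Nat.gcd q (Finset.univ.gcd a) = 1}

/-- `R(S)`, the fractions `a/q ∈ T^d ∩ ℚ^d` with `a ∈ A_q`, `q ∈ S`. -/
def RfracIW (d : ℕ) (S : Set ℕ) : Set (Fin d → ℚ) :=
  {v | ∃ q ∈ S, ∃ a ∈ AqIW d q, v = fun i => (a i : ℚ) / (q : ℚ)}

/-- `𝒰_N = R(P_N)` where `P_N = {Q·w : Q ∣ Q₀, w ∈ Π(ℙ_N) ∪ {1}}`. -/
def UNIW (ρ : ℝ) (d N : ℕ) : Set (Fin d → ℚ) :=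
  RfracIW d {q | ∃ Q w : ℕ, Q ∣ QzeroIW ρ N ∧
    (w ∈ PiProdIW (DIW ρ) (primesIW ρ N) ∨ w = 1) ∧ q = Q * w}

/-- A set `Λ ⊆ Π(V) ∪ {1}` has the `O` property. -/
def HasOProp (D : ℕ) (V : Set ℕ) (Λ : Set ℕ) : Prop :=
  Λ = {1} ∨
    ∃ k : ℕ, 1 ≤ k ∧ k ≤ D ∧
      ∃ S : Fin k → Finset ℕ,
        (∀ j, (S j).Nonempty) ∧
        (∀ j, ∃ γ : ℕ, 1 ≤ γ ∧ γ ≤ D ∧ ∀ q ∈ S j, ∃ p ∈ V, q = p ^ γ) ∧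
        (∀ w ∈ Λ, ∃! c : Fin k → ℕ, (∀ j, c j ∈ S j) ∧ w = ∏ j, c j) ∧
        (∀ (j j' : Fin k) (q q' : ℕ), q ∈ S j → q' ∈ S j' →
          (j, q) ≠ (j', q') → Nat.Coprime q q')

/-!
Colour the elements of `V` at random with `k` colours. A given `k`-tuple of distinct elements
receives the colours `1, …, k` in this order with probability `k ^ (-k)`, so by the union bound
over the at most `N ^ k` tuples, `O(log N)` colourings suffice to colour each tuple correctly at
least once. The products with prescribed number of factors, exponents and successful colouring
have the `O` property, the `j`-th set consisting of the `γ_j`-th powers of the elements of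
colour `j`. A reduced fraction determines its denominator `Q w`, which determines `w` because `w`
is coprime to `Q₀`; so disjoint sets of `w` give disjoint sets of fractions.
-/

open Finset Function

section PerfectHash

variable {α β γ κ ι : Type*}

/-- A family of colourings of `α` is an ordered perfect hash family if every `κ`-indexed tuple of
distinct elements is coloured by its own indices under some member of the family. The usual notion
asks only that the colours in the tuple be distinct. -/
def IsOrderedPerfectHash (f : ι → α → κ) : Prop :=
  ∀ p : κ → α, Injective p → ∃ i, f i ∘ p = id

theorem card_pow_card_le_mul_card_comp_eq [Fintype α] [Fintype β] [Fintype γ] [DecidableEq α]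
    [DecidableEq γ] {p : β → α} (hp : Injective p) (g : β → γ) :
    Fintype.card γ ^ Fintype.card α ≤
      Fintype.card γ ^ Fintype.card β * #{f : α → γ | f ∘ p = g} := by
  classical
  let overwrite : (α → γ) → (β → γ) × {f : α → γ // f ∘ p = g} :=
    fun f => (f ∘ p, ⟨extend p g f, extend_comp hp g f⟩)
  have overwrite_injective : Injective overwrite := by
    intro f f' h
    simp only [overwrite, Prod.mk.injEq, Subtype.mk.injEq] at h
    funext x
    by_cases hx : ∃ b, p b = x
    · obtain ⟨b, rfl⟩ := hx
      exact congrFun h.1 b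
    · simpa only [extend_apply' _ _ _ hx] using congrFun h.2 x
  simpa only [Fintype.card_prod, Fintype.card_subtype, Fintype.card_fun]
    using Fintype.card_le_of_injective overwrite overwrite_injective

theorem card_comp_ne_le [Fintype α] [Fintype β] [Fintype γ] [Nonempty γ] [DecidableEq α]
    [DecidableEq γ] {p : β → α} (hp : Injective p) (g : β → γ) :
    (#{f : α → γ | f ∘ p ≠ g} : ℝ) ≤
      (1 - 1 / (Fintype.card γ : ℝ) ^ Fintype.card β) *
        (Fintype.card γ : ℝ) ^ Fintype.card α := by
  have hpos : (0 : ℝ) < (Fintype.card γ : ℝ) ^ Fintype.card β :=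
    pow_pos (mod_cast Fintype.card_pos) _
  have hsplit : (#{f : α → γ | f ∘ p = g} + #{f : α → γ | f ∘ p ≠ g} : ℝ) =
      (Fintype.card γ : ℝ) ^ Fintype.card α := by
    rw [← Nat.cast_add, card_filter_add_card_filter_not, card_univ, Fintype.card_fun, Nat.cast_pow]
  have heq : 1 / (Fintype.card γ : ℝ) ^ Fintype.card β * (Fintype.card γ : ℝ) ^ Fintype.card α ≤
      #{f : α → γ | f ∘ p = g} := by
    rw [one_div, inv_mul_le_iff₀ hpos]
    exact_mod_cast card_pow_card_le_mul_card_comp_eq hp g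
  linarith

theorem card_forall_comp_ne_le [Fintype α] [Fintype β] [Fintype γ] [Fintype ι] [Nonempty γ]
    [DecidableEq α] [DecidableEq γ] [DecidableEq ι] {p : β → α}
    (hp : Injective p) (g : β → γ) :
    (#{f : ι → α → γ | ∀ i, f i ∘ p ≠ g} : ℝ) ≤
      ((1 - 1 / (Fintype.card γ : ℝ) ^ Fintype.card β) *
        (Fintype.card γ : ℝ) ^ Fintype.card α) ^ Fintype.card ι := by
  have hpi : ({f : ι → α → γ | ∀ i, f i ∘ p ≠ g} : Finset (ι → α → γ)) =
      Fintype.piFinset fun _ => {f | f ∘ p ≠ g} := by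
    ext f
    simp only [mem_filter_univ, Fintype.mem_piFinset]
  rw [hpi, Fintype.card_piFinset, prod_const, card_univ, Nat.cast_pow]
  gcongr
  exact card_comp_ne_le hp g

variable [Fintype α] [Fintype κ] [Nonempty κ] [Fintype ι]

theorem exists_isOrderedPerfectHash_of_mul_pow_lt_one
    (h : (Fintype.card α : ℝ) ^ Fintype.card κ *
      (1 - 1 / (Fintype.card κ : ℝ) ^ Fintype.card κ) ^ Fintype.card ι < 1) :
    ∃ f : ι → α → κ, IsOrderedPerfectHash f := by
  classical
  by_contra! hbad
  simp only [IsOrderedPerfectHash, not_forall, not_exists] at hbad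
  let bad (p : κ → α) : Finset (ι → α → κ) := {f | ∀ i, f i ∘ p ≠ id}
  let tuples : Finset (κ → α) := {p | Injective p}
  set k : ℝ := (Fintype.card κ : ℝ)
  set ε : ℝ := 1 - 1 / k ^ Fintype.card κ
  have hε : 0 ≤ ε := by
    simpa only [Nat.cast_pow] using
      Nat.one_sub_one_div_cast_nonneg (α := ℝ) (Fintype.card κ ^ Fintype.card κ)
  have hk : 0 < k := Nat.cast_pos.2 Fintype.card_pos
  have hcover : univ ⊆ tuples.biUnion bad := by
    intro f _
    obtain ⟨p, hp, hf⟩ := hbad f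
    exact mem_biUnion.2 ⟨p, (mem_filter_univ p).2 hp, (mem_filter_univ f).2 hf⟩
  have hcard_bad : ∀ p ∈ tuples, (#(bad p) : ℝ) ≤
      (ε * k ^ Fintype.card α) ^ Fintype.card ι :=
    fun p hp => card_forall_comp_ne_le ((mem_filter_univ p).1 hp) id
  have hcard_tuples : (#tuples : ℝ) ≤ (Fintype.card α : ℝ) ^ Fintype.card κ := by
    exact_mod_cast (card_le_univ tuples).trans_eq Fintype.card_fun
  refine lt_irrefl ((k ^ Fintype.card α) ^ Fintype.card ι) ?_
  calc (k ^ Fintype.card α) ^ Fintype.card ι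
      = #(univ : Finset (ι → α → κ)) := by
        simp only [card_univ, Fintype.card_fun, Nat.cast_pow, k]
    _ ≤ ∑ p ∈ tuples, (#(bad p) : ℝ) := mod_cast (card_le_card hcover).trans card_biUnion_le
    _ ≤ #tuples * (ε * k ^ Fintype.card α) ^ Fintype.card ι := by
        simpa only [nsmul_eq_mul] using sum_le_card_nsmul _ _ _ hcard_bad
    _ ≤ (Fintype.card α : ℝ) ^ Fintype.card κ * (ε * k ^ Fintype.card α) ^ Fintype.card ι := by
        gcongr
    _ = ((Fintype.card α : ℝ) ^ Fintype.card κ * ε ^ Fintype.card ι) *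
          (k ^ Fintype.card α) ^ Fintype.card ι := by rw [mul_pow, mul_assoc]
    _ < (k ^ Fintype.card α) ^ Fintype.card ι := mul_lt_of_lt_one_left (pow_pos (pow_pos hk _) _) h

theorem exists_isOrderedPerfectHash_of_log_lt
    (h : (Fintype.card κ : ℝ) ^ Fintype.card κ *
      (Fintype.card κ * Real.log (Fintype.card α)) < Fintype.card ι) :
    ∃ f : ι → α → κ, IsOrderedPerfectHash f := by
  apply exists_isOrderedPerfectHash_of_mul_pow_lt_one
  set k := Fintype.card κ
  set K : ℝ := (k : ℝ) ^ k
  have hK : 0 < K := pow_pos (mod_cast Fintype.card_pos) _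
  have hε : 0 ≤ 1 - 1 / K := by
    simpa only [Nat.cast_pow] using Nat.one_sub_one_div_cast_nonneg (α := ℝ) (k ^ k)
  calc (Fintype.card α : ℝ) ^ k * (1 - 1 / K) ^ Fintype.card ι
      ≤ Real.exp (Real.log (Fintype.card α)) ^ k * Real.exp (-(1 / K)) ^ Fintype.card ι := by
        gcongr
        · exact Real.le_exp_log _
        · exact Real.one_sub_le_exp_neg _
    _ = Real.exp (k * Real.log (Fintype.card α) - Fintype.card ι / K) := by
        rw [← Real.exp_nat_mul, ← Real.exp_nat_mul, ← Real.exp_add]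
        ring_nf
    _ < 1 := by
        rw [Real.exp_lt_one_iff, sub_neg, lt_div_iff₀ hK, mul_comm]
        exact h

end PerfectHash

theorem exists_pairwise_disjoint_refinement {α ι : Type*} [Fintype ι] {W : Set α} {A : ι → Set α}
    (hW : W ⊆ ⋃ i, A i) :
    ∃ (n : ℕ) (B : Fin n → Set α), n ≤ Fintype.card ι ∧ (∀ i, (B i).Nonempty) ∧
      (∀ i, ∃ j, B i ⊆ A j) ∧ ⋃ i, B i = W ∧ Pairwise (Disjoint on B) := by
  classical
  choose label hlabel using fun x : W => Set.mem_iUnion.1 (hW x.2)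
  let e := Fintype.equivFin (Set.range label)
  let B (i : Fin (Fintype.card (Set.range label))) : Set α :=
    (↑) '' (label ⁻¹' {(e.symm i : ι)})
  have hB_union : ⋃ i, B i = W := by
    ext x
    simp only [B, Set.mem_iUnion]
    constructor
    · rintro ⟨_, y, -, rfl⟩
      exact y.2
    · intro hx
      exact ⟨e ⟨label ⟨x, hx⟩, Set.mem_range_self _⟩, ⟨x, hx⟩, by simp, rfl⟩
  refine ⟨_, B, Fintype.card_subtype_le _, fun i => ?_, fun i => ⟨e.symm i, ?_⟩, hB_union, ?_⟩
  · obtain ⟨x, hx⟩ := (e.symm i).2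
    exact ⟨x, x, hx, rfl⟩
  · rintro _ ⟨x, hx, rfl⟩
    exact hx ▸ hlabel x
  · intro i i' hne
    refine (Set.disjoint_image_iff Subtype.val_injective).2 (Disjoint.preimage _ ?_)
    simpa [Subtype.val_inj] using hne

section OProperty

variable {V : Set ℕ} {k D : ℕ}

theorem eq_of_prod_eq_prod_of_coprime {ι : Type*} [Fintype ι] {c c' : ι → ℕ}
    (hcoprime : ∀ j j', (j, c j) ≠ (j', c' j') → (c j).Coprime (c' j')) (hc : ∀ j, c j ≠ 1)
    (hprod : ∏ j, c j = ∏ j, c' j) : c = c' := by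
  funext j
  by_contra hne
  have hcop : (c j).Coprime (∏ j', c' j') := Nat.Coprime.prod_right fun j' _ =>
    hcoprime j j' fun h => by
      obtain ⟨rfl, h⟩ := Prod.mk.inj h
      exact hne h
  exact hc j (hcop.eq_one_of_dvd (hprod ▸ dvd_prod_of_mem c (mem_univ j)))

/-- The products `∏ j, p j ^ γ j` in which the `j`-th base `p j ∈ V` has colour `j` under the
colouring `c`. These are the candidates for sets with the `O` property. -/
def coloredProducts (c : V → Fin k) (γ : Fin k → ℕ) : Set ℕ :=
  {w | ∃ p : Fin k → V, c ∘ p = id ∧ w = ∏ j, (p j : ℕ) ^ γ j}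

theorem hasOProp_of_subset_coloredProducts (hfin : V.Finite) (hcoprime : V.Pairwise Nat.Coprime)
    (hone : 1 ∉ V) (hk : k ∈ Icc 1 D) (c : V → Fin k) {γ : Fin k → ℕ}
    (hγ : ∀ j, γ j ∈ Icc 1 D) {Λ : Set ℕ} (hne : Λ.Nonempty) (hΛ : Λ ⊆ coloredProducts c γ) :
    HasOProp D V Λ := by
  classical
  have := hfin.fintype
  let S (j : Fin k) : Finset ℕ := ({p : V | c p = j} : Finset V).image fun p : V => (p : ℕ) ^ γ j
  have mem_S {j q} : q ∈ S j ↔ ∃ p : V, c p = j ∧ (p : ℕ) ^ γ j = q := by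
    simp only [S, mem_image, mem_filter_univ]
  have pow_mem_S {p : Fin k → V} (hp : c ∘ p = id) (j) : (p j : ℕ) ^ γ j ∈ S j :=
    mem_S.2 ⟨p j, congrFun hp j, rfl⟩
  have coprime_S : ∀ (j j' : Fin k) (q q' : ℕ), q ∈ S j → q' ∈ S j' →
      (j, q) ≠ (j', q') → q.Coprime q' := by
    intro j j' q q' hq hq' hne
    obtain ⟨p, rfl, rfl⟩ := mem_S.1 hq
    obtain ⟨p', rfl, rfl⟩ := mem_S.1 hq'
    exact Nat.Coprime.pow _ _ (hcoprime p.2 p'.2 fun h => hne (by rw [Subtype.ext h]))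
  have ne_one_of_mem_S {j q} (hq : q ∈ S j) : q ≠ 1 := by
    obtain ⟨p, -, rfl⟩ := mem_S.1 hq
    have hγj := (mem_Icc.1 (hγ j)).1
    intro h
    exact hone ((Nat.pow_eq_one.1 h).resolve_right (by omega) ▸ p.2)
  refine Or.inr ⟨k, (mem_Icc.1 hk).1, (mem_Icc.1 hk).2, S, fun j => ?_, fun j => ?_,
    fun w hw => ?_, coprime_S⟩
  · obtain ⟨_, hw⟩ := hne
    obtain ⟨p, hp, -⟩ := hΛ hw
    exact ⟨_, pow_mem_S hp j⟩
  · refine ⟨γ j, (mem_Icc.1 (hγ j)).1, (mem_Icc.1 (hγ j)).2, fun q hq => ?_⟩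
    obtain ⟨p, -, rfl⟩ := mem_S.1 hq
    exact ⟨p, p.2, rfl⟩
  · obtain ⟨p, hp, rfl⟩ := hΛ hw
    refine ⟨fun j => (p j : ℕ) ^ γ j, ⟨pow_mem_S hp, rfl⟩, fun s ⟨hs, hprod⟩ => ?_⟩
    exact eq_of_prod_eq_prod_of_coprime
      (fun j j' => coprime_S j j' _ _ (hs j) (pow_mem_S hp j'))
      (fun j => ne_one_of_mem_S (hs j)) hprod.symm

/-- The data on which a class of the decomposition of `Π(V)` depends: the number of factors, their
exponents, and the index of a colouring in a family of `M` colourings. -/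
abbrev ProductLabel (D M : ℕ) : Type :=
  Σ k : Icc 1 D, (Fin k → Icc 1 D) × Fin M

theorem card_productLabel_le (D M : ℕ) :
    Fintype.card (ProductLabel D M) ≤ D * (D ^ D * M) := by
  simp only [Fintype.card_sigma, Fintype.card_prod, Fintype.card_fun, Fintype.card_fin,
    Fintype.card_coe, Nat.card_Icc, Nat.add_sub_cancel]
  calc ∑ k : Icc 1 D, D ^ (k : ℕ) * M
      ≤ ∑ _k : Icc 1 D, D ^ D * M := by
        refine sum_le_sum fun k _ => ?_
        obtain ⟨hk, hkD⟩ := mem_Icc.1 k.2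
        gcongr
        exact hk.trans hkD
    _ = D * (D ^ D * M) := by
        simp only [sum_const, card_univ, Fintype.card_coe, Nat.card_Icc, Nat.add_sub_cancel,
          smul_eq_mul]

/-- The class of `Π(V) ∪ {1}` with a given label, for a family of `M` colourings with `k` colours
for each `k`; the label `none` stands for `{1}`. Distinct classes may overlap. -/
def productClass {M : ℕ} (f : ∀ k : Icc 1 D, Fin M → V → Fin k) :
    Option (ProductLabel D M) → Set ℕ
  | none => {1}
  | some ⟨k, γ, i⟩ => coloredProducts (f k i) fun j => γ j

theorem hasOProp_of_subset_productClass (hfin : V.Finite) (hcoprime : V.Pairwise Nat.Coprime)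
    (hone : 1 ∉ V) {M : ℕ} (f : ∀ k : Icc 1 D, Fin M → V → Fin k)
    (o : Option (ProductLabel D M)) {Λ : Set ℕ} (hne : Λ.Nonempty) (hΛ : Λ ⊆ productClass f o) :
    HasOProp D V Λ := by
  rcases o with _ | ⟨k, γ, i⟩
  · exact Or.inl (hne.subset_singleton_iff.1 hΛ)
  · exact hasOProp_of_subset_coloredProducts hfin hcoprime hone k.2 (f k i)
      (fun j => (γ j).2) hne hΛ

theorem PiProdIW_union_singleton_one_subset_iUnion_productClass {M : ℕ}
    {f : ∀ k : Icc 1 D, Fin M → V → Fin k} (hf : ∀ k, IsOrderedPerfectHash (f k)) :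
    PiProdIW D V ∪ {1} ⊆ ⋃ o, productClass f o := by
  rintro w (⟨k, hk, hkD, p, γ, hp, hinj, hγ, rfl⟩ | hw)
  · obtain ⟨i, hi⟩ := hf ⟨k, mem_Icc.2 ⟨hk, hkD⟩⟩ (fun j => ⟨p j, hp j⟩)
      fun _ _ h => hinj (congrArg Subtype.val h)
    exact Set.mem_iUnion.2 ⟨some ⟨⟨k, mem_Icc.2 ⟨hk, hkD⟩⟩,
      fun j => ⟨γ j, mem_Icc.2 (hγ j)⟩, i⟩, fun j => ⟨p j, hp j⟩, hi, rfl⟩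
  · exact Set.mem_iUnion.2 ⟨none, hw⟩

theorem exists_isOrderedPerfectHash_forall_le {N M : ℕ} (hV : V.encard ≤ N)
    (hM : (D : ℝ) ^ D * (D * Real.log (N + 2)) < M) :
    ∃ f : ∀ k : Icc 1 D, Fin M → V → Fin k, ∀ k, IsOrderedPerfectHash (f k) := by
  have hfin : V.Finite := Set.finite_of_encard_le_coe hV
  have := hfin.fintype
  have hcard : Fintype.card V ≤ N := by
    rwa [Set.encard_eq_coe_toFinset_card, Nat.cast_le, Set.toFinset_card] at hV
  refine Classical.skolem.1 fun k => ?_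
  obtain ⟨hk, hkD⟩ := mem_Icc.1 k.2
  have : NeZero (k : ℕ) := ⟨by omega⟩
  apply exists_isOrderedPerfectHash_of_log_lt
  simp only [Fintype.card_fin]
  have hlog : Real.log (Fintype.card V) ≤ Real.log (N + 2) := by
    rcases (Fintype.card V).eq_zero_or_pos with h0 | hpos
    · rw [h0, Nat.cast_zero, Real.log_zero]
      exact Real.log_nonneg (by linarith [(N.cast_nonneg : (0 : ℝ) ≤ N)])
    · exact Real.log_le_log (mod_cast hpos) (mod_cast (by omega))
  have hpow : (k : ℝ) ^ (k : ℕ) ≤ (D : ℝ) ^ D :=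
    mod_cast (Nat.pow_le_pow_left hkD _).trans (Nat.pow_le_pow_right (hk.trans hkD) hkD)
  refine lt_of_le_of_lt ?_ hM
  gcongr

theorem exists_partition_hasOProp (D : ℕ) :
    ∃ C : ℝ, 0 < C ∧ ∀ (N : ℕ) (V : Set ℕ), V.encard ≤ N → V.Pairwise Nat.Coprime → 1 ∉ V →
      ∃ (I : ℕ) (Λ : Fin I → Set ℕ),
        (I : ℝ) ≤ C * Real.log ((N : ℝ) + 2) ∧
        (∀ i, HasOProp D V (Λ i)) ∧
        ⋃ i, Λ i = PiProdIW D V ∪ {1} ∧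
        Pairwise (Disjoint on Λ) := by
  refine ⟨D * (D ^ D * (D ^ D * D + 2)) + 2, by positivity, fun N V hV hcoprime hone => ?_⟩
  set L := Real.log ((N : ℝ) + 2)
  have hL : 1 / 2 ≤ L := by
    have : Real.log 2 ≤ L := Real.log_le_log two_pos (by linarith [(N.cast_nonneg : (0 : ℝ) ≤ N)])
    linarith [Real.log_two_gt_d9]
  obtain ⟨M, hM_lt, hM_le⟩ : ∃ M : ℕ, (D : ℝ) ^ D * (D * L) < M ∧ M ≤ (D : ℝ) ^ D * (D * L) + 1 :=
    ⟨⌊(D : ℝ) ^ D * (D * L)⌋₊ + 1, mod_cast Nat.lt_floor_add_one _,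
      by simpa using Nat.floor_le (show 0 ≤ (D : ℝ) ^ D * (D * L) by positivity)⟩
  obtain ⟨f, hf⟩ := exists_isOrderedPerfectHash_forall_le hV hM_lt
  obtain ⟨I, Λ, hI, hne, hsub, hunion, hdisj⟩ :=
    exists_pairwise_disjoint_refinement (PiProdIW_union_singleton_one_subset_iUnion_productClass hf)
  refine ⟨I, Λ, ?_, fun i => ?_, hunion, hdisj⟩
  · calc (I : ℝ) ≤ D * (D ^ D * M) + 1 := by
          have := card_productLabel_le D M
          rw [Fintype.card_option] at hI
          exact_mod_cast hI.trans (Nat.add_le_add_right this 1)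
      _ ≤ D * (D ^ D * ((D ^ D * D + 2) * L)) + 2 * L := by
          gcongr <;> linarith
      _ = (D * (D ^ D * (D ^ D * D + 2)) + 2) * L := by ring
  · obtain ⟨o, ho⟩ := hsub i
    exact hasOProp_of_subset_productClass (Set.finite_of_encard_le_coe hV) hcoprime hone f o
      (hne i) ho

end OProperty

/-- The set of denominators `{Q·w : Q ∣ Q₀, w ∈ Λ}`; it is `P_N` for `Λ = Π(ℙ_N) ∪ {1}` and
`P_N^i` for `Λ = Λ_i`. -/
def denominatorsIW (Q₀ : ℕ) (Λ : Set ℕ) : Set ℕ :=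
  {q | ∃ Q w : ℕ, Q ∣ Q₀ ∧ w ∈ Λ ∧ q = Q * w}

theorem denominatorsIW_iUnion {ι : Sort*} (Q₀ : ℕ) (Λ : ι → Set ℕ) :
    denominatorsIW Q₀ (⋃ i, Λ i) = ⋃ i, denominatorsIW Q₀ (Λ i) := by
  ext q
  simp only [denominatorsIW, Set.mem_iUnion, Set.mem_ofPred_eq]
  grind

theorem RfracIW_iUnion {ι : Sort*} (d : ℕ) (S : ι → Set ℕ) :
    RfracIW d (⋃ i, S i) = ⋃ i, RfracIW d (S i) := by
  ext v
  simp only [RfracIW, Set.mem_iUnion, Set.mem_ofPred_eq]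
  grind

theorem ne_zero_of_mem_AqIW {d q : ℕ} {a : Fin d → ℕ} (ha : a ∈ AqIW d q) : q ≠ 0 := by
  rintro rfl
  obtain ⟨hle, hgcd⟩ := ha
  rw [Nat.gcd_zero_left] at hgcd
  have : IsEmpty (Fin d) := ⟨fun i => absurd (hle i) (by omega)⟩
  simp at hgcd

theorem dvd_of_mem_AqIW_of_div_eq_div {d q r : ℕ} {a b : Fin d → ℕ} (ha : a ∈ AqIW d q)
    (hr : r ≠ 0) (h : ∀ i, (a i : ℚ) / q = b i / r) : q ∣ r := by
  have hq : (q : ℚ) ≠ 0 := Nat.cast_ne_zero.2 (ne_zero_of_mem_AqIW ha)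
  have hdvd : ∀ i, q ∣ a i * r := fun i =>
    ⟨b i, by
      have := (div_eq_div_iff hq (Nat.cast_ne_zero.2 hr)).1 (h i)
      rw [mul_comm q]
      exact_mod_cast this⟩
  have hgcd : q ∣ univ.gcd a * r := by
    simpa only [Finset.gcd_mul_right, normalize_eq] using
      Finset.dvd_gcd fun i (_ : i ∈ univ) => hdvd i
  exact Nat.Coprime.dvd_of_dvd_mul_left ha.2 hgcd

theorem disjoint_RfracIW (d : ℕ) {S T : Set ℕ} (hST : Disjoint S T) :
    Disjoint (RfracIW d S) (RfracIW d T) := by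
  rw [Set.disjoint_left] at hST ⊢
  rintro _ ⟨q, hq, a, ha, rfl⟩ ⟨r, hr, b, hb, h⟩
  have hqr : q = r := Nat.dvd_antisymm
    (dvd_of_mem_AqIW_of_div_eq_div ha (ne_zero_of_mem_AqIW hb) (congrFun h))
    (dvd_of_mem_AqIW_of_div_eq_div hb (ne_zero_of_mem_AqIW ha) fun i => (congrFun h i).symm)
  exact hST hq (hqr ▸ hr)

theorem coprime_of_mem_PiProdIW {D m w : ℕ} {V : Set ℕ} (hV : ∀ p ∈ V, p.Coprime m)
    (hw : w ∈ PiProdIW D V) : w.Coprime m := by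
  obtain ⟨k, -, -, p, γ, hp, -, -, rfl⟩ := hw
  exact Nat.Coprime.prod_left fun j _ => (hV _ (hp j)).pow_left _

theorem disjoint_denominatorsIW {Q₀ : ℕ} {Λ Λ' : Set ℕ} (hΛ : ∀ w ∈ Λ, w.Coprime Q₀)
    (hΛ' : ∀ w ∈ Λ', w.Coprime Q₀) (h : Disjoint Λ Λ') :
    Disjoint (denominatorsIW Q₀ Λ) (denominatorsIW Q₀ Λ') := by
  rw [Set.disjoint_left] at h ⊢
  rintro _ ⟨Q, w, hQ, hw, rfl⟩ ⟨Q', w', hQ', hw', heq⟩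
  have hdvd : w ∣ w' :=
    ((hΛ w hw).coprime_dvd_right hQ').dvd_of_dvd_mul_left (heq ▸ dvd_mul_left w Q)
  have hdvd' : w' ∣ w :=
    ((hΛ' w' hw').coprime_dvd_right hQ).dvd_of_dvd_mul_left (heq ▸ dvd_mul_left w' Q')
  exact h hw (Nat.dvd_antisymm hdvd hdvd' ▸ hw')

theorem statement13_general (D : ℕ) :
    ∃ C : ℝ, 0 < C ∧
      ∀ (d N Q₀ : ℕ) (V : Set ℕ), V.encard ≤ N → V.Pairwise Nat.Coprime → 1 ∉ V →
        (∀ p ∈ V, p.Coprime Q₀) →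
        ∃ (I : ℕ) (Λ : Fin I → Set ℕ),
          (I : ℝ) ≤ C * Real.log ((N : ℝ) + 2) ∧
          (∀ i, Λ i ⊆ PiProdIW D V ∪ {1}) ∧
          (∀ i, HasOProp D V (Λ i)) ∧
          RfracIW d (denominatorsIW Q₀ (PiProdIW D V ∪ {1})) =
            ⋃ i, RfracIW d (denominatorsIW Q₀ (Λ i)) ∧
          Pairwise fun i i' =>
            Disjoint (RfracIW d (denominatorsIW Q₀ (Λ i)))
              (RfracIW d (denominatorsIW Q₀ (Λ i'))) := by
  obtain ⟨C, hC, hpartition⟩ := exists_partition_hasOProp D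
  refine ⟨C, hC, fun d N Q₀ V hcard hcoprime hone hQ₀ => ?_⟩
  obtain ⟨I, Λ, hI, hO, hunion, hdisj⟩ := hpartition N V hcard hcoprime hone
  have hsub (i) : Λ i ⊆ PiProdIW D V ∪ {1} := hunion ▸ Set.subset_iUnion Λ i
  have hΛQ₀ (i) : ∀ w ∈ Λ i, w.Coprime Q₀ := fun w hw => by
    rcases hsub i hw with hw | rfl
    · exact coprime_of_mem_PiProdIW hQ₀ hw
    · exact Nat.coprime_one_left Q₀
  refine ⟨I, Λ, hI, hsub, hO, ?_, fun i i' hne => ?_⟩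
  · rw [← hunion, denominatorsIW_iUnion, RfracIW_iUnion]
  · exact disjoint_RfracIW d (disjoint_denominatorsIW (hΛQ₀ i) (hΛQ₀ i') (hdisj hne))

theorem encard_primesIW_le (ρ : ℝ) (N : ℕ) : (primesIW ρ N).encard ≤ N := by
  calc (primesIW ρ N).encard ≤ (Icc 1 N : Set ℕ).encard :=
        Set.encard_le_encard fun p hp => by
          simpa using ⟨hp.1.one_le, hp.2.2⟩
    _ = N := by rw [Set.encard_coe_eq_coe_finsetCard, Nat.card_Icc, Nat.add_sub_cancel]

theorem pairwise_coprime_primesIW (ρ : ℝ) (N : ℕ) : (primesIW ρ N).Pairwise Nat.Coprime :=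
  fun _ hp _ hq => (Nat.coprime_primes hp.1 hq.1).2

theorem coprime_QzeroIW_of_mem_primesIW {ρ : ℝ} {N p : ℕ} (hp : p ∈ primesIW ρ N) :
    p.Coprime (QzeroIW ρ N) :=
  (hp.1.coprime_factorial_of_lt hp.2.1).pow_right _

/-- **Fundamental combinatorial lemma (Lemma 12).**  For every `ρ > 0` there is `C_ρ > 0`
such that for every `N` the set `𝒰_N` is a disjoint union of at most `C_ρ log(N+2)` sets
`𝒰_N^i = R(P_N^i)` with `P_N^i = {Q·w : Q ∣ Q₀, w ∈ Λ_i}`, where each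
`Λ_i ⊆ Π(ℙ_N) ∪ {1}` has the `O` property. -/
theorem statement13 (ρ : ℝ) (hρ : 0 < ρ) (d : ℕ) :
    ∃ C : ℝ, 0 < C ∧
      ∀ N : ℕ, 1 ≤ N →
        ∃ (I : ℕ) (Λ : Fin I → Set ℕ),
          (I : ℝ) ≤ C * Real.log ((N : ℝ) + 2) ∧
          (∀ i, Λ i ⊆ PiProdIW (DIW ρ) (primesIW ρ N) ∪ {1}) ∧
          (∀ i, HasOProp (DIW ρ) (primesIW ρ N) (Λ i)) ∧
          UNIW ρ d N = ⋃ i, RfracIW d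
            {q | ∃ Q w : ℕ, Q ∣ QzeroIW ρ N ∧ w ∈ Λ i ∧ q = Q * w} ∧
          Pairwise fun i i' =>
            Disjoint
              (RfracIW d {q | ∃ Q w : ℕ, Q ∣ QzeroIW ρ N ∧ w ∈ Λ i ∧ q = Q * w})
              (RfracIW d {q | ∃ Q w : ℕ, Q ∣ QzeroIW ρ N ∧ w ∈ Λ i' ∧ q = Q * w}) := by
  obtain ⟨C, hC, h⟩ := statement13_general (DIW ρ)
  exact ⟨C, hC, fun N _ => h d N (QzeroIW ρ N) (primesIW ρ N) (encard_primesIW_le ρ N)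
    (pairwise_coprime_primesIW ρ N) (fun h1 => Nat.not_prime_one h1.1)
    fun _ => coprime_QzeroIW_of_mem_primesIW⟩

end
end

section
/- Let r ∈ ℕ, let X be a finite set, let Z ⊆ X with |Z| ≤ r, and let (g_{i,j} : i ∈ X, 1 ≤ j ≤ r) be complex numbers. Then for every sequence I = (i₀(1), i₁(1), …, i₀(r), i₁(r)) ∈ X^{2r} which does NOT have the uniqueness property and whose set of entries equals Z (i.e. {i₀(1), i₁(1), …, i₀(r), i₁(r)} = Z), one has ∏_{j=1}^{r} |g_{i₀(j),j}| · |g_{i₁(j),j}| ≤ 2 · Σ ∏_{j=1}^{r} |g_{i(j),j}|², where the sum is over all sequences (i(1),…,i(r)) ∈ X^r with {i(1),…,i(r)} = Z. -/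
/-!
Read `j ↦ (i₀ j, i₁ j)` as the edges of a multigraph with vertex set `Z`; failure of the uniqueness
property says that every vertex meets at least two edge ends. Orient the edges so that every vertex
is both a head and a tail of some edge. If `d₀` and `d₁` are the tails and the heads, then
`∏ |g_{i₀(j),j}| |g_{i₁(j),j}| = A B` with `A = ∏ |g_{d₀(j),j}|` and `B = ∏ |g_{d₁(j),j}|`, and both
`A²` and `B²` are terms of the sum, so already `A B ≤ max(A², B²)` is bounded by the sum.

An orientation is a 2-colouring of the edge ends whose colours are exchanged by the involution `σ`
swapping the two ends of each edge. Let the involution `τ` exchange two chosen ends at each vertex: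
a colouring that `τ` also exchanges at its non-fixed points gives every vertex both colours. If `σ`
and `τ` have no fixed points, such a colouring exists because `σ` exchanges the orbits of the
rotation `σ τ` in pairs.
-/

open Equiv Function

section TwoColoring

variable {α : Type*}

theorem exists_bool_swapped_by_involutive {σ : α → α} (hσ : Involutive σ) (hσ_ne : ∀ s, σ s ≠ s) :
    ∃ c : α → Bool, ∀ s, c (σ s) = !c s := by
  obtain ⟨_, _⟩ := exists_wellFoundedLT α
  refine ⟨fun s => decide (s < σ s), fun s => ?_⟩
  rcases lt_or_gt_of_ne (hσ_ne s) with h | h <;> simp [hσ s, h, h.le]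

section Dihedral

variable {σ τ : Perm α}

theorem involutive_apply_zpow_mul (hσ : Involutive σ) (hτ : Involutive τ) (k : ℤ) (s : α) :
    σ (((σ * τ) ^ k) s) = ((σ * τ) ^ (-k)) (σ s) := by
  have hsemi : SemiconjBy σ (σ * τ) (σ * τ)⁻¹ := by
    ext t
    simp [hτ.symm_eq_self_of_involutive, hσ _]
  rw [zpow_neg, ← inv_zpow]
  exact Perm.congr_fun (hsemi.zpow_right k) s

theorem not_sameCycle_mul_apply (hσ : Involutive σ) (hτ : Involutive τ) (hσ_ne : ∀ s, σ s ≠ s)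
    (hτ_ne : ∀ s, τ s ≠ s) (s : α) : ¬ (σ * τ).SameCycle s (σ s) := by
  rintro ⟨n, hn⟩
  -- `σ` reflects the orbit of `s` about `n / 2`, where `σ` or `τ` then has a fixed point.
  have hreflect : ∀ k : ℤ, σ (((σ * τ) ^ k) s) = ((σ * τ) ^ (n - k)) s := fun k => by
    rw [involutive_apply_zpow_mul hσ hτ, ← hn, ← Perm.mul_apply, ← zpow_add, neg_add_eq_sub]
  rcases Int.even_or_odd' n with ⟨k, rfl | rfl⟩
  · apply hσ_ne (((σ * τ) ^ k) s)
    rw [hreflect, two_mul, add_sub_cancel_right]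
  · apply hτ_ne (((σ * τ) ^ k) s)
    apply σ.injective
    rw [hreflect, show 2 * k + 1 - k = 1 + k by ring, zpow_one_add]
    rfl

theorem exists_bool_swapped_by_two_perms (hσ : Involutive σ) (hτ : Involutive τ)
    (hσ_ne : ∀ s, σ s ≠ s) (hτ_ne : ∀ s, τ s ≠ s) :
    ∃ c : α → Bool, (∀ s, c (σ s) = !c s) ∧ ∀ s, c (τ s) = !c s := by
  let orbit : Setoid α := Perm.SameCycle.setoid (σ * τ)
  let σ' : Quotient orbit → Quotient orbit := Quotient.map σ fun s t ⟨k, hk⟩ =>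
    ⟨-k, by rw [← involutive_apply_zpow_mul hσ hτ, hk]⟩
  have hσ' : Involutive σ' := by
    rintro ⟨s⟩
    exact congrArg (Quotient.mk orbit) (hσ s)
  have hσ'_ne : ∀ q, σ' q ≠ q := by
    rintro ⟨s⟩ h
    exact not_sameCycle_mul_apply hσ hτ hσ_ne hτ_ne s (Quotient.exact h.symm)
  obtain ⟨c, hc⟩ := exists_bool_swapped_by_involutive hσ' hσ'_ne
  refine ⟨fun s => c ⟦s⟧, fun s => hc ⟦s⟧, fun s => ?_⟩
  have hrot : (⟦s⟧ : Quotient orbit) = σ' ⟦τ s⟧ := Quotient.sound ⟨1, by simp⟩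
  change c ⟦τ s⟧ = !c ⟦s⟧
  rw [hrot, hc, Bool.not_not]

end Dihedral

theorem exists_bool_swapped_by_two_involutions {σ τ : α → α} (hσ : Involutive σ)
    (hτ : Involutive τ) (hσ_ne : ∀ s, σ s ≠ s) :
    ∃ c : α → Bool, (∀ s, c (σ s) = !c s) ∧ ∀ s, τ s ≠ s → c (τ s) = !c s := by
  classical
  -- On two copies of `α`, the fixed points of `τ` can be exchanged with their twins.
  let σ' : α × Bool → α × Bool := Prod.map σ id
  let τ' : α × Bool → α × Bool := fun p => if τ p.1 = p.1 then (p.1, !p.2) else (τ p.1, p.2)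
  have hσ' : Involutive σ' := fun p => Prod.ext (hσ p.1) rfl
  have hτ' : Involutive τ' := fun p => by
    by_cases h : τ p.1 = p.1
    · simp [τ', h]
    · simp [τ', h, hτ p.1, Ne.symm h]
  have hσ'_ne : ∀ p, σ' p ≠ p := fun p h => hσ_ne p.1 (congrArg Prod.fst h)
  have hτ'_ne : ∀ p, τ' p ≠ p := fun p => by
    by_cases h : τ p.1 = p.1 <;> simp [τ', h, Prod.ext_iff]
  obtain ⟨c, hcσ, hcτ⟩ := exists_bool_swapped_by_two_perms (σ := hσ'.toPerm σ')
    (τ := hτ'.toPerm τ') hσ' hτ' hσ'_ne hτ'_ne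
  refine ⟨fun s => c (s, false), fun s => hcσ (s, false), fun s hs => ?_⟩
  simpa [τ', hs] using hcτ (s, false)

end TwoColoring

section Uniqueness

variable {α ι X : Type*}

/-- The uniqueness property of a family: some value occurs at exactly one index. The sequence
`(i₀(1), i₁(1), …, i₀(r), i₁(r))` is encoded as the family `Sum.elim i₀ i₁`. -/
def HasUniquenessProperty (v : α → X) : Prop :=
  ∃ n, ∀ l, l ≠ n → v l ≠ v n

theorem not_hasUniquenessProperty_iff {v : α → X} :
    ¬ HasUniquenessProperty v ↔ ∀ s, ∃ t, t ≠ s ∧ v t = v s := by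
  simp only [HasUniquenessProperty, not_exists, not_forall, not_not, exists_prop]

theorem card_filter_sumElim_eq [Fintype α] [Fintype ι] [DecidableEq X] (u : α → X) (v : ι → X)
    (x : X) : (Finset.univ.filter fun s => Sum.elim u v s = x).card =
      (Finset.univ.filter fun s => u s = x).card + (Finset.univ.filter fun s => v s = x).card := by
  rw [Finset.card_filter, Finset.card_filter, Finset.card_filter, Fintype.sum_sum_type]
  rfl

theorem not_hasUniquenessProperty_sumElim_of_two_le_card [Fintype ι] [DecidableEq X]
    {i₀ i₁ : ι → X} (h : ∀ x ∈ Finset.univ.image i₀ ∪ Finset.univ.image i₁,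
      2 ≤ (Finset.univ.filter fun j => i₀ j = x).card +
        (Finset.univ.filter fun j => i₁ j = x).card) :
    ¬ HasUniquenessProperty (Sum.elim i₀ i₁) :=
  not_hasUniquenessProperty_iff.2 fun s => by
    have hcard := h (Sum.elim i₀ i₁ s) (by rcases s with j | j <;> simp)
    rw [← card_filter_sumElim_eq] at hcard
    obtain ⟨t, ht, hts⟩ := Finset.exists_mem_ne hcard s
    exact ⟨t, hts, (Finset.mem_filter.1 ht).2⟩

theorem exists_involutive_moving_every_fiber {v : α → X} (hv : ¬ HasUniquenessProperty v) :
    ∃ τ : α → α, Involutive τ ∧ (∀ s, v (τ s) = v s) ∧ ∀ s, ∃ t, v t = v s ∧ τ t ≠ t := by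
  classical
  choose f hf_ne hf using not_hasUniquenessProperty_iff.1 hv
  let a : α → α := fun s => Set.rangeSplitting v ⟨v s, s, rfl⟩
  have hva : ∀ s, v (a s) = v s := fun s => Set.apply_rangeSplitting v _
  have ha_congr : ∀ {s t}, v s = v t → a s = a t := fun {s t} h => by simp only [a, h]
  let τ : α → α := fun s => swap (a s) (f (a s)) s
  have hvτ : ∀ s, v (τ s) = v s := fun s => by
    simp only [τ, swap_apply_def]
    split_ifs with hs hs
    · rw [hf, hva]
    · rw [hva]
    · rfl
  refine ⟨τ, fun s => ?_, hvτ, fun s => ⟨a s, hva s, ?_⟩⟩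
  · simp only [τ, ha_congr (hvτ s), swap_apply_self]
  · simpa only [τ, ha_congr (hva s), swap_apply_left] using hf_ne (a s)

theorem exists_bool_swapped_by_involutive_onto_fibers {σ : α → α} (hσ : Involutive σ)
    (hσ_ne : ∀ s, σ s ≠ s) {v : α → X} (hv : ¬ HasUniquenessProperty v) :
    ∃ c : α → Bool, (∀ s, c (σ s) = !c s) ∧ ∀ s b, ∃ t, v t = v s ∧ c t = b := by
  obtain ⟨τ, hτ, hvτ, hmove⟩ := exists_involutive_moving_every_fiber hv
  obtain ⟨c, hcσ, hcτ⟩ := exists_bool_swapped_by_two_involutions hσ hτ hσ_ne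
  refine ⟨c, hcσ, fun s b => ?_⟩
  obtain ⟨t, hts, hτt⟩ := hmove s
  by_cases hct : c t = b
  · exact ⟨t, hts, hct⟩
  · exact ⟨τ t, (hvτ t).trans hts, by rw [hcτ t hτt, Bool.not_eq.2 hct]⟩

theorem exists_orientation_range_eq {i₀ i₁ : ι → X}
    (h : ¬ HasUniquenessProperty (Sum.elim i₀ i₁)) :
    ∃ d₀ d₁ : ι → X, (∀ j, s(d₀ j, d₁ j) = s(i₀ j, i₁ j)) ∧
      Set.range d₀ = Set.range i₀ ∪ Set.range i₁ ∧ Set.range d₁ = Set.range i₀ ∪ Set.range i₁ := by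
  obtain ⟨c, hc, hfiber⟩ := exists_bool_swapped_by_involutive_onto_fibers
    (σ := (Sum.swap : ι ⊕ ι → ι ⊕ ι)) Sum.swap_swap (by rintro (j | j) <;> simp) h
  let d : Bool → ι → X := fun b j => if c (Sum.inl j) = b then i₀ j else i₁ j
  have hd : ∀ s, d (c s) (s.elim id id) = Sum.elim i₀ i₁ s := by
    rintro (j | j)
    · simp [d]
    · have hj : c (Sum.inl j) = !c (Sum.inr j) := hc (Sum.inr j)
      simp [d, hj]
  have hrange : ∀ b, Set.range (d b) = Set.range i₀ ∪ Set.range i₁ := fun b => by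
    rw [← Set.Sum.elim_range]
    refine Set.Subset.antisymm ?_ ?_
    · rintro _ ⟨j, rfl⟩
      by_cases hj : c (Sum.inl j) = b
      · exact ⟨Sum.inl j, by simp [d, hj]⟩
      · exact ⟨Sum.inr j, by simp [d, hj]⟩
    · rintro _ ⟨s, rfl⟩
      obtain ⟨t, hts, rfl⟩ := hfiber s b
      exact ⟨t.elim id id, (hd t).trans hts⟩
  refine ⟨d true, d false, fun j => ?_, hrange true, hrange false⟩
  cases hj : c (Sum.inl j) <;> simp [d, hj, Sym2.eq_swap]

end Uniqueness

section ProductBound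

variable {ι X R : Type*} [Fintype ι] [DecidableEq ι] [DecidableEq X]

/-- The sequences indexed by `ι` whose set of entries is exactly `Z`; cutting them out of the
`Z`-valued ones makes this a finset even when `X` is infinite. -/
def sequencesWithImage (ι : Type*) [Fintype ι] [DecidableEq ι] (Z : Finset X) :
    Finset (ι → X) :=
  {c ∈ Fintype.piFinset fun _ => Z | Finset.univ.image c = Z}

theorem mem_sequencesWithImage {Z : Finset X} {c : ι → X} :
    c ∈ sequencesWithImage ι Z ↔ Finset.univ.image c = Z := by
  simp only [sequencesWithImage, Finset.mem_filter, Fintype.mem_piFinset, and_iff_right_iff_imp]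
  rintro rfl j
  exact Finset.mem_image_of_mem c (Finset.mem_univ j)

theorem mem_sequencesWithImage_iff_range_eq {Z : Finset X} {c : ι → X} :
    c ∈ sequencesWithImage ι Z ↔ Set.range c = Z := by
  rw [mem_sequencesWithImage, ← Finset.coe_inj, Finset.coe_image, Finset.coe_univ, Set.image_univ]

theorem filter_image_univ_eq_sequencesWithImage [Fintype X] (Z : Finset X) :
    Finset.univ.filter (fun c : ι → X => Finset.univ.image c = Z) = sequencesWithImage ι Z := by
  ext c
  rw [Finset.mem_filter_univ, mem_sequencesWithImage]

variable [CommSemiring R] [LinearOrder R] [IsOrderedRing R]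

theorem mul_le_of_sq_le_of_sq_le {a b s : R} (ha : 0 ≤ a) (hb : 0 ≤ b) (has : a ^ 2 ≤ s)
    (hbs : b ^ 2 ≤ s) : a * b ≤ s := by
  rw [sq] at has hbs
  rcases le_total a b with hab | hba
  · exact (mul_le_mul_of_nonneg_right hab hb).trans hbs
  · exact (mul_le_mul_of_nonneg_left hba ha).trans has

theorem statement14_general {f : X → ι → R} (hf : ∀ x j, 0 ≤ f x j) {i₀ i₁ : ι → X}
    {Z : Finset X} (hset : Finset.univ.image i₀ ∪ Finset.univ.image i₁ = Z)
    (h : ¬ HasUniquenessProperty (Sum.elim i₀ i₁)) :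
    ∏ j, f (i₀ j) j * f (i₁ j) j ≤ ∑ c ∈ sequencesWithImage ι Z, ∏ j, f (c j) j ^ 2 := by
  have hrange : Set.range i₀ ∪ Set.range i₁ = Z := by simp [← hset]
  obtain ⟨d₀, d₁, hd, hd₀, hd₁⟩ := exists_orientation_range_eq h
  have hnonneg : ∀ d : ι → X, 0 ≤ ∏ j, f (d j) j := fun d => Finset.prod_nonneg fun j _ => hf _ _
  have hsq_le : ∀ d : ι → X, Set.range d = Z →
      (∏ j, f (d j) j) ^ 2 ≤ ∑ c ∈ sequencesWithImage ι Z, ∏ j, f (c j) j ^ 2 := fun d hdZ => by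
    rw [← Finset.prod_pow]
    exact Finset.single_le_sum (f := fun c : ι → X => ∏ j, f (c j) j ^ 2)
      (fun c _ => Finset.prod_nonneg fun j _ => pow_nonneg (hf _ _) 2)
      (mem_sequencesWithImage_iff_range_eq.2 hdZ)
  calc ∏ j, f (i₀ j) j * f (i₁ j) j
      = ∏ j, f (d₀ j) j * f (d₁ j) j := Finset.prod_congr rfl fun j _ => by
        rcases Sym2.eq_iff.1 (hd j) with ⟨h₀, h₁⟩ | ⟨h₀, h₁⟩
        · rw [h₀, h₁]
        · rw [h₀, h₁, mul_comm]
    _ = (∏ j, f (d₀ j) j) * ∏ j, f (d₁ j) j := Finset.prod_mul_distrib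
    _ ≤ ∑ c ∈ sequencesWithImage ι Z, ∏ j, f (c j) j ^ 2 :=
        mul_le_of_sq_le_of_sq_le (hnonneg d₀) (hnonneg d₁) (hsq_le d₀ (hd₀.trans hrange))
          (hsq_le d₁ (hd₁.trans hrange))

end ProductBound

/-- **Combinatorial lemma (Lemma 17).** Let `Z ⊆ X` with `|Z| ≤ r` and let
`(g_{i,j})_{i∈X, j∈{1,…,r}}` be complex numbers.  If the sequence
`(i₀(1), i₁(1), …, i₀(r), i₁(r))` does not have the uniqueness property (every entry
occurs at least twice) and its set of entries equals `Z`, then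
`∏_j |g_{i₀(j),j}|·|g_{i₁(j),j}| ≤ 2 Σ_{{i(1),…,i(r)}=Z} ∏_j |g_{i(j),j}|²`. -/
theorem statement14 (r : ℕ) (X : Type*) [Fintype X] [DecidableEq X]
    (Z : Finset X) (hZ : Z.card ≤ r) (g : X → Fin r → ℂ)
    (i₀ i₁ : Fin r → X)
    (hset : Finset.image i₀ Finset.univ ∪ Finset.image i₁ Finset.univ = Z)
    (hnouniq : ∀ x ∈ Finset.image i₀ Finset.univ ∪ Finset.image i₁ Finset.univ,
      2 ≤ (Finset.univ.filter fun j => i₀ j = x).card +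
          (Finset.univ.filter fun j => i₁ j = x).card) :
    ∏ j : Fin r, (‖g (i₀ j) j‖ * ‖g (i₁ j) j‖) ≤
      2 * ∑ c ∈ Finset.univ.filter (fun c : Fin r → X => Finset.image c Finset.univ = Z),
        ∏ j : Fin r, ‖g (c j) j‖ ^ 2 := by
  rw [filter_image_univ_eq_sequencesWithImage]
  exact (statement14_general (fun x j => norm_nonneg (g x j)) hset
    (not_hasUniquenessProperty_sumElim_of_two_le_card hnouniq)).trans
      (le_mul_of_one_le_left (by positivity) one_le_two)
end

section
/- Gaussian-sum approximation for the averaging multiplier: there is a constant C > 0 (depending only on k and N₀, hence on d) such that for every N ∈ ℕ, all reals L₁ ≥ N and L₂ ≥ 1, every integer q with 1 ≤ q ≤ L₃ where L₃ ≤ N^{1/2}, every a ∈ A_q, and every ξ ∈ [−1/2, 1/2)^d satisfying |ξ_γ − a_γ/q| ≤ L₁^{−|γ|} L₂ for all γ ∈ Γ, one has | m_N(ξ) − G(a/q) Φ_N(ξ − a/q) | ≤ C ( L₃ N^{−1} + L₂ L₃ N^{−1} Σ_{γ∈Γ} (N/L₁)^{|γ|} ); in particular this is at most C' L₂ L₃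 N^{−1} for a constant C' depending only on k and N₀. -/
noncomputable section

/-- The set `Γ` of multi-indices `γ ≠ 0` with `0 ≤ γ_j ≤ N₀`. -/
abbrev Gam (k N₀ : ℕ) := {γ : Fin k → Fin (N₀ + 1) // γ ≠ 0}

/-- The multiplier `m_N(ξ) = N^{−k} Σ_{y ∈ {1,…,N}^k} e^{2πi ξ·Q(y)}` of the averaging
operator along the canonical polynomial mapping `Q`. -/
def mAvg (k N₀ N : ℕ) (ξ : Gam k N₀ → ℝ) : ℂ :=
  ((N : ℂ) ^ k)⁻¹ *
    ∑ y ∈ Fintype.piFinset fun _ : Fin k => Finset.Icc 1 N,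
      Complex.exp (2 * Real.pi * Complex.I *
        ((∑ γ : Gam k N₀, ξ γ * ∏ i, (y i : ℝ) ^ ((γ : Fin k → Fin (N₀ + 1)) i : ℕ) : ℝ) : ℂ))

/-- The continuous analogue `Φ_N(θ) = ∫_{[0,1]^k} e^{2πi θ·Q(Ny)} dy`. -/
def PhiAvg (k N₀ N : ℕ) (θ : Gam k N₀ → ℝ) : ℂ :=
  ∫ y in {y : Fin k → ℝ | ∀ i, y i ∈ Set.Icc (0 : ℝ) 1},
    Complex.exp (2 * Real.pi * Complex.I *
      ((∑ γ : Gam k N₀, θ γ * ∏ i, ((N : ℝ) * y i) ^ ((γ : Fin k → Fin (N₀ + 1)) i : ℕ) : ℝ) : ℂ))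

/-- The Gaussian sum `G(a/q) = q^{−k} Σ_{r ∈ {1,…,q}^k} e^{2πi (a/q)·Q(r)}`. -/
def gaussSumCan (k N₀ q : ℕ) (a : Gam k N₀ → ℕ) : ℂ :=
  ((q : ℂ) ^ k)⁻¹ *
    ∑ r ∈ Fintype.piFinset fun _ : Fin k => Finset.Icc 1 q,
      Complex.exp (2 * Real.pi * Complex.I *
        ((∑ γ : Gam k N₀, ((a γ : ℝ) / q) * ∏ i, (r i : ℝ) ^ ((γ : Fin k → Fin (N₀ + 1)) i : ℕ) : ℝ) : ℂ))

/-!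
Write `e(t) = exp (2πit)`. With `θ = ξ - a/q`, the summand `e(ξ · Q(y))` is the product of
`e((a/q) · Q(y))`, which is `q`-periodic in each coordinate, and `e(θ · Q(y))`, which varies slowly
at scale `q`. Shifting the cube `{1, …, N}^k` by a vector of `{1, …, q}^k` changes the mean by
`O(q/N)`, and averaging over all such shifts replaces the periodic factor by its mean `G(a/q)` at
the cost of the oscillation of `e(θ · Q)` at scale `q`. The remaining mean of `e(θ · Q(y))` is a
Riemann sum for `Φ_N(θ)`. Rescaled to the unit cube, the phase has coefficients `θ_γ N^{|γ|}`, so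
both the oscillation and the Riemann sum error are at most a constant times
`(q/N) ∑ |θ_γ| N^{|γ|}`.
-/

open Finset MeasureTheory
open scoped BigOperators FourierTransform NNReal

section Expectation

variable {α 𝕜 : Type*} [RCLike 𝕜] {s : Finset α}

lemma norm_expect_le_of_norm_le (hs : s.Nonempty) {f : α → 𝕜} {r : ℝ}
    (hf : ∀ i ∈ s, ‖f i‖ ≤ r) : ‖𝔼 i ∈ s, f i‖ ≤ r :=
  (RCLike.norm_expect_le (K := 𝕜)).trans (expect_le hs hf)

lemma norm_expect_sub_expect_le (hs : s.Nonempty) {f g : α → 𝕜} {r : ℝ}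
    (hfg : ∀ i ∈ s, ‖f i - g i‖ ≤ r) : ‖𝔼 i ∈ s, f i - 𝔼 i ∈ s, g i‖ ≤ r := by
  rw [← expect_sub_distrib]
  exact norm_expect_le_of_norm_le hs hfg

end Expectation

section IntegerCube

variable {ι : Type*} [Fintype ι] [DecidableEq ι]

lemma card_Icc_one_natCast (N : ℕ) : #(Icc 1 (N : ι → ℕ)) = N ^ Fintype.card ι := by
  simp [Pi.card_Icc]

lemma Icc_one_natCast_nonempty (N : ℕ) [NeZero N] : (Icc 1 (N : ι → ℕ)).Nonempty :=
  nonempty_Icc.2 fun _ => NeZero.one_le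

variable {𝕜 : Type*} [RCLike 𝕜]

lemma expect_Icc_one_natCast (N : ℕ) (g : (ι → ℕ) → 𝕜) :
    𝔼 y ∈ Icc 1 (N : ι → ℕ), g y =
      ((N : 𝕜) ^ Fintype.card ι)⁻¹ * ∑ y ∈ Icc 1 (N : ι → ℕ), g y := by
  rw [expect_eq_sum_div_card, card_Icc_one_natCast, Nat.cast_pow, div_eq_inv_mul]

end IntegerCube

section Shift

lemma norm_sum_sub_sum_le_card_sdiff {α E : Type*} [DecidableEq α] [SeminormedAddCommGroup E]
    {s t : Finset α} (hcard : #s = #t) {g : α → E} (hg : ∀ x, ‖g x‖ ≤ 1) :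
    ‖∑ x ∈ s, g x - ∑ x ∈ t, g x‖ ≤ 2 * #(s \ t) := by
  have norm_sum_le_card (u : Finset α) : ‖∑ x ∈ u, g x‖ ≤ #u := by
    simpa using norm_sum_le_of_le u fun x _ => hg x
  calc ‖∑ x ∈ s, g x - ∑ x ∈ t, g x‖
      = ‖∑ x ∈ s \ t, g x - ∑ x ∈ t \ s, g x‖ := by rw [sum_sdiff_sub_sum_sdiff]
    _ ≤ #(s \ t) + #(t \ s) :=
        (norm_sub_le _ _).trans (add_le_add (norm_sum_le_card _) (norm_sum_le_card _))
    _ = 2 * #(s \ t) := by rw [card_sdiff_comm hcard]; ring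

lemma one_sub_mul_div_le_tsub_div_pow (N q n : ℕ) [NeZero N] :
    1 - n * (q / N : ℝ) ≤ (((N - q : ℕ) : ℝ) / N) ^ n := by
  have hN : (0 : ℝ) < N := Nat.cast_pos.2 (NeZero.pos N)
  have ratio_nonneg : 0 ≤ ((N - q : ℕ) : ℝ) / N := by positivity
  have ratio_ge : 1 - (q / N : ℝ) ≤ ((N - q : ℕ) : ℝ) / N := by
    rw [one_sub_div hN.ne']
    gcongr
    rw [sub_le_iff_le_add, ← Nat.cast_add, Nat.cast_le]
    exact le_tsub_add
  calc 1 - n * (q / N : ℝ) = 1 + n * (1 - q / N - 1 : ℝ) := by ring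
    _ ≤ 1 + n * (((N - q : ℕ) : ℝ) / N - 1) := by gcongr
    _ ≤ (((N - q : ℕ) : ℝ) / N) ^ n := one_add_mul_sub_le_pow (by linarith) n

variable {ι : Type*} [Fintype ι] [DecidableEq ι] {N q : ℕ}

lemma pow_card_le_card_Icc_one_add {s : ι → ℕ} (hs : s ≤ q) :
    (N - q) ^ Fintype.card ι ≤ #(Icc (1 + s) (N : ι → ℕ)) := by
  rw [Pi.card_Icc, ← Finset.card_univ]
  refine pow_card_le_prod _ _ _ fun i _ => ?_
  have hsi : s i ≤ q := by simpa using hs i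
  simp only [Nat.card_Icc, Pi.add_apply, Pi.one_apply, Pi.natCast_apply, Nat.cast_id]
  omega

lemma card_Icc_sdiff_map_add_le [NeZero N] {s : ι → ℕ} (hs : s ≤ q) :
    (#(Icc 1 (N : ι → ℕ) \ (Icc 1 (N : ι → ℕ)).map (addRightEmbedding s)) : ℝ) ≤
      Fintype.card ι * (q / N) * N ^ Fintype.card ι := by
  have hN : (0 : ℝ) < N := Nat.cast_pos.2 (NeZero.pos N)
  have overlap_subset :
      Icc (1 + s) (N : ι → ℕ) ⊆ (Icc 1 (N : ι → ℕ)).map (addRightEmbedding s) := by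
    rw [map_add_right_Icc]
    exact Icc_subset_Icc_right le_self_add
  calc (#(Icc 1 (N : ι → ℕ) \ (Icc 1 (N : ι → ℕ)).map (addRightEmbedding s)) : ℝ)
      ≤ #(Icc 1 (N : ι → ℕ) \ Icc (1 + s) N) :=
        Nat.cast_le.2 (card_le_card (sdiff_subset_sdiff le_rfl overlap_subset))
    _ = N ^ Fintype.card ι - #(Icc (1 + s) (N : ι → ℕ)) := by
        rw [cast_card_sdiff (Icc_subset_Icc_left le_self_add), card_Icc_one_natCast, Nat.cast_pow]
    _ ≤ N ^ Fintype.card ι - ((N - q : ℕ) : ℝ) ^ Fintype.card ι := by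
        gcongr
        exact_mod_cast pow_card_le_card_Icc_one_add hs
    _ = (1 - (((N - q : ℕ) : ℝ) / N) ^ Fintype.card ι) * N ^ Fintype.card ι := by
        rw [div_pow]; field_simp
    _ ≤ Fintype.card ι * (q / N) * N ^ Fintype.card ι := by
        gcongr
        linarith [one_sub_mul_div_le_tsub_div_pow N q (Fintype.card ι)]

variable {𝕜 : Type*} [RCLike 𝕜] [NeZero N]

lemma norm_expect_sub_expect_add_le {g : (ι → ℕ) → 𝕜} (hg : ∀ y, ‖g y‖ ≤ 1) {s : ι → ℕ}
    (hs : s ≤ q) :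
    ‖𝔼 y ∈ Icc 1 (N : ι → ℕ), g y - 𝔼 y ∈ Icc 1 (N : ι → ℕ), g (y + s)‖ ≤
      2 * (Fintype.card ι * (q / N)) := by
  have hN : (0 : ℝ) < N := Nat.cast_pos.2 (NeZero.pos N)
  have sum_shift : ∑ y ∈ Icc 1 (N : ι → ℕ), g (y + s) =
      ∑ z ∈ (Icc 1 (N : ι → ℕ)).map (addRightEmbedding s), g z := by simp [-map_add_right_Icc]
  have norm_sum_sub_le := (norm_sum_sub_sum_le_card_sdiff (card_map _).symm hg).trans
    (mul_le_mul_of_nonneg_left (card_Icc_sdiff_map_add_le (N := N) hs) zero_le_two)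
  rw [expect_Icc_one_natCast, expect_Icc_one_natCast, ← mul_sub, sum_shift, norm_mul, norm_inv,
    norm_pow, RCLike.norm_natCast, inv_mul_le_iff₀ (by positivity)]
  exact norm_sum_sub_le.trans_eq (by ring)

theorem norm_expect_mul_sub_mul_expect_le [NeZero q] {c f : (ι → ℕ) → 𝕜}
    (hc : ∀ y, ‖c y‖ ≤ 1) (hf : ∀ y, ‖f y‖ ≤ 1) {G : 𝕜}
    (hG : ∀ y, 𝔼 s ∈ Icc 1 (q : ι → ℕ), c (y + s) = G) {δ : ℝ}
    (hδ : ∀ y ∈ Icc 1 (N : ι → ℕ), ∀ z ∈ Icc 1 (N : ι → ℕ), y ≤ z → z ≤ y + q →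
      ‖f z - f y‖ ≤ δ) :
    ‖𝔼 y ∈ Icc 1 (N : ι → ℕ), c y * f y - G * 𝔼 y ∈ Icc 1 (N : ι → ℕ), f y‖ ≤
      2 * (Fintype.card ι * (q / N)) + δ := by
  -- Freezing `f` beyond the cube makes its oscillation bound apply to the shifted points `y + s`.
  let fClamp (y : ι → ℕ) : 𝕜 := f (y ⊓ N)
  have clamp_of_mem : ∀ y ∈ Icc 1 (N : ι → ℕ), fClamp y = f y := fun y hy =>
    congrArg f (inf_eq_left.2 (mem_Icc.1 hy).2)
  have clamp_eq : 𝔼 y ∈ Icc 1 (N : ι → ℕ), c y * f y = 𝔼 y ∈ Icc 1 (N : ι → ℕ), c y * fClamp y :=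
    expect_congr rfl fun y hy => by rw [clamp_of_mem y hy]
  have norm_c_mul_clamp_le (y : ι → ℕ) : ‖c y * fClamp y‖ ≤ 1 := by
    rw [norm_mul]
    exact mul_le_one₀ (hc y) (norm_nonneg _) (hf _)
  have average_shifts : G * 𝔼 y ∈ Icc 1 (N : ι → ℕ), f y =
      𝔼 s ∈ Icc 1 (q : ι → ℕ), 𝔼 y ∈ Icc 1 (N : ι → ℕ), c (y + s) * f y := by
    rw [expect_comm, mul_expect]
    simp only [← expect_mul, hG]
  have shift_error : ∀ s ∈ Icc 1 (q : ι → ℕ),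
      ‖𝔼 y ∈ Icc 1 (N : ι → ℕ), c y * fClamp y -
        𝔼 y ∈ Icc 1 (N : ι → ℕ), c (y + s) * fClamp (y + s)‖ ≤
      2 * (Fintype.card ι * (q / N)) := fun s hs =>
    norm_expect_sub_expect_add_le (g := fun y => c y * fClamp y)
      (fun y => norm_c_mul_clamp_le y) (mem_Icc.1 hs).2
  have oscillation_error : ∀ s ∈ Icc 1 (q : ι → ℕ),
      ‖𝔼 y ∈ Icc 1 (N : ι → ℕ), c (y + s) * fClamp (y + s) -
        𝔼 y ∈ Icc 1 (N : ι → ℕ), c (y + s) * f y‖ ≤ δ := by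
    refine fun s hs => norm_expect_sub_expect_le (Icc_one_natCast_nonempty N) fun y hy => ?_
    obtain ⟨one_le_y, y_le_N⟩ := mem_Icc.1 hy
    have y_le_clamp : y ≤ (y + s) ⊓ N := le_inf le_self_add y_le_N
    rw [← mul_sub, norm_mul]
    refine (mul_le_of_le_one_left (norm_nonneg _) (hc _)).trans
      (hδ y hy _ (mem_Icc.2 ⟨one_le_y.trans y_le_clamp, inf_le_right⟩) y_le_clamp ?_)
    exact inf_le_left.trans (add_le_add_right (mem_Icc.1 hs).2 y)
  rw [clamp_eq, average_shifts, ← expect_const (Icc_one_natCast_nonempty (ι := ι) q)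
    (𝔼 y ∈ Icc 1 (N : ι → ℕ), c y * fClamp y)]
  exact norm_expect_sub_expect_le (Icc_one_natCast_nonempty q) fun s hs =>
    (norm_sub_le_norm_sub_add_norm_sub _ _ _).trans
      (add_le_add (shift_error s hs) (oscillation_error s hs))

end Shift

section RiemannSum

variable {ι : Type*} {N : ℕ} [NeZero N]

/-- The half-open cube of side `1 / N` in `ι → ℝ` whose upper corner is `y / N`: the cell of the
`N`-th regular partition of the unit cube that is sampled at `y / N`. -/
def gridCell (N : ℕ) [NeZero N] (y : ι → ℕ) : Set (ι → ℝ) :=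
  BoxIntegral.unitPartition.box N fun i => (y i : ℤ) - 1

lemma mem_gridCell {y : ι → ℕ} {x : ι → ℝ} :
    x ∈ gridCell N y ↔ ∀ i, ((y i : ℝ) - 1) / N < x i ∧ x i ≤ y i / N := by
  simp [gridCell]

lemma natCast_div_mem_gridCell (y : ι → ℕ) : (fun i => (y i : ℝ) / N) ∈ gridCell N y :=
  have hN : (0 : ℝ) < N := Nat.cast_pos.2 (NeZero.pos N)
  mem_gridCell.2 fun _ => ⟨div_lt_div_of_pos_right (sub_one_lt _) hN, le_rfl⟩

lemma pairwise_disjoint_gridCell (s : Set (ι → ℕ)) :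
    s.Pairwise (Function.onFun Disjoint (gridCell N)) := by
  intro y _ z _ hyz
  refine BoxIntegral.unitPartition.disjoint.1 fun h => hyz (funext fun i => ?_)
  simpa using congrFun h i

lemma measurableSet_gridCell [Finite ι] (y : ι → ℕ) : MeasurableSet (gridCell N y) :=
  BoxIntegral.Box.measurableSet_coe _

variable [Fintype ι]

lemma dist_le_of_mem_gridCell {y : ι → ℕ} {x : ι → ℝ} (hx : x ∈ gridCell N y) :
    dist x (fun i => (y i : ℝ) / N) ≤ 1 / N := by
  refine (dist_pi_le_iff (by positivity)).2 fun i => ?_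
  have hxi := mem_gridCell.1 hx i
  rw [sub_div] at hxi
  rw [Real.dist_eq, abs_le]
  constructor <;> linarith

lemma volume_gridCell (y : ι → ℕ) : volume (gridCell N y) = 1 / N ^ Fintype.card ι :=
  BoxIntegral.unitPartition.volume_box N _

variable [DecidableEq ι]

lemma biUnion_gridCell :
    ⋃ y ∈ Icc 1 (N : ι → ℕ), gridCell N y = Set.univ.pi fun _ => Set.Ioc (0 : ℝ) 1 := by
  have hN : (0 : ℝ) < N := Nat.cast_pos.2 (NeZero.pos N)
  ext x
  simp only [Set.mem_iUnion, mem_gridCell, exists_prop, Set.mem_univ_pi, Set.mem_Ioc]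
  constructor
  · rintro ⟨y, hy, hxy⟩ i
    rw [mem_Icc] at hy
    have one_le_y : (1 : ℝ) ≤ y i := by exact_mod_cast hy.1 i
    have y_le_N : (y i : ℝ) ≤ N := by exact_mod_cast hy.2 i
    exact ⟨(div_nonneg (sub_nonneg.2 one_le_y) hN.le).trans_lt (hxy i).1,
      (hxy i).2.trans ((div_le_one hN).2 y_le_N)⟩
  · intro hx
    refine ⟨fun i => ⌈N * x i⌉₊, mem_Icc.2 ⟨fun i => ?_, fun i => ?_⟩, fun i => ⟨?_, ?_⟩⟩
    · exact Nat.ceil_pos.2 (mul_pos hN (hx i).1)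
    · exact Nat.ceil_le.2 (mul_le_of_le_one_right hN.le (hx i).2)
    · rw [div_lt_iff₀' hN, sub_lt_iff_lt_add]
      exact Nat.ceil_lt_add_one (mul_pos hN (hx i).1).le
    · rw [le_div_iff₀' hN]
      exact Nat.le_ceil _

lemma gridCell_subset_Icc {y : ι → ℕ} (hy : y ∈ Icc 1 (N : ι → ℕ)) :
    gridCell N y ⊆ Set.Icc 0 1 :=
  calc gridCell N y ⊆ Set.univ.pi fun _ => Set.Ioc (0 : ℝ) 1 :=
        biUnion_gridCell (N := N) (ι := ι) ▸ Set.subset_biUnion_of_mem (u := gridCell N) hy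
    _ ⊆ Set.univ.pi fun _ => Set.Icc (0 : ℝ) 1 := Set.pi_mono fun _ _ => Set.Ioc_subset_Icc_self
    _ = Set.Icc 0 1 := Set.pi_univ_Icc 0 1

lemma natCast_div_mem_Icc {y : ι → ℕ} (hy : y ∈ Icc 1 (N : ι → ℕ)) :
    (fun i => (y i : ℝ) / N) ∈ Set.Icc 0 1 :=
  gridCell_subset_Icc hy (natCast_div_mem_gridCell y)

variable {𝕜 : Type*} [RCLike 𝕜] {f : (ι → ℝ) → 𝕜}

lemma setIntegral_Icc_eq_expect_setAverage_gridCell (N : ℕ) [NeZero N]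
    (hf : IntegrableOn f (Set.Icc 0 1)) :
    ∫ x in Set.Icc 0 1, f x = 𝔼 y ∈ Icc 1 (N : ι → ℕ), ⨍ x in gridCell N y, f x := by
  have Ioc_ae_eq_Icc : (Set.univ.pi fun _ : ι => Set.Ioc (0 : ℝ) 1) =ᵐ[volume] Set.Icc 0 1 :=
    Measure.univ_pi_Ioc_ae_eq_Icc
  rw [← setIntegral_congr_set Ioc_ae_eq_Icc, ← biUnion_gridCell (N := N),
    integral_biUnion_finset _ (fun y _ => measurableSet_gridCell y)
      (pairwise_disjoint_gridCell _) fun y hy => hf.mono_set (gridCell_subset_Icc hy),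
    expect_Icc_one_natCast, mul_sum]
  simp [setAverage_eq, measureReal_def, volume_gridCell, NeZero.ne, RCLike.real_smul_eq_coe_mul]

theorem norm_expect_sub_setIntegral_le_of_lipschitzOnWith (N : ℕ) [NeZero N] {K : ℝ≥0}
    (hf : LipschitzOnWith K f (Set.Icc 0 1)) :
    ‖𝔼 y ∈ Icc 1 (N : ι → ℕ), f (fun i => y i / N) - ∫ x in Set.Icc 0 1, f x‖ ≤ K * (1 / N) := by
  have hint : IntegrableOn f (Set.Icc 0 1) := hf.continuousOn.integrableOn_compact isCompact_Icc
  rw [setIntegral_Icc_eq_expect_setAverage_gridCell N hint]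
  refine norm_expect_sub_expect_le (Icc_one_natCast_nonempty N) fun y hy => ?_
  rw [← mem_closedBall_iff_norm']
  refine (convex_closedBall _ _).set_average_mem Metric.isClosed_closedBall
    (by simp [volume_gridCell]) (by simp [volume_gridCell, NeZero.ne]) ?_
    (hint.mono_set (gridCell_subset_Icc hy))
  filter_upwards [ae_restrict_mem (measurableSet_gridCell y)] with x hx
  calc dist (f x) (f fun i => y i / N)
      ≤ K * dist x (fun i => (y i : ℝ) / N) :=
        hf.dist_le_mul x (gridCell_subset_Icc hy hx) _ (natCast_div_mem_Icc hy)
    _ ≤ K * (1 / N) := by gcongr; exact dist_le_of_mem_gridCell hx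

end RiemannSum

section PeriodicWeight

variable {ι : Type*} [Fintype ι] [DecidableEq ι]

lemma expect_Icc_comp_zmodCast {M : Type*} [AddCommMonoid M] [Module ℚ≥0 M] {q : ℕ}
    [NeZero q] (h : (ι → ZMod q) → M) :
    𝔼 s ∈ Icc 1 (q : ι → ℕ), h (fun i => s i) = 𝔼 x, h x := by
  refine expect_nbij' (fun s i => s i) (fun x i => (x i - 1).val + 1) (by simp) ?_ ?_ (by simp)
    (by simp)
  · intro x _
    exact mem_Icc.2 ⟨fun i => Nat.le_add_left 1 _, fun i => ZMod.val_lt (x i - 1)⟩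
  · intro s hs
    funext i
    obtain ⟨n, hn⟩ := Nat.exists_eq_add_of_le' ((mem_Icc.1 hs).1 i)
    have s_le_q : s i ≤ q := by simpa using (mem_Icc.1 hs).2 i
    have n_lt_q : n < q := by simp only [Pi.one_apply] at hn; omega
    simp [hn, ZMod.val_natCast_of_lt n_lt_q]

lemma expect_Icc_comp_zmodCast_add {M : Type*} [AddCommMonoid M] [Module ℚ≥0 M] {q : ℕ}
    [NeZero q] (h : (ι → ZMod q) → M) (y : ι → ℕ) :
    𝔼 s ∈ Icc 1 (q : ι → ℕ), h (fun i => (y + s) i) =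
      𝔼 s ∈ Icc 1 (q : ι → ℕ), h (fun i => s i) := by
  simp only [Pi.add_apply, Nat.cast_add]
  rw [expect_Icc_comp_zmodCast h,
    expect_Icc_comp_zmodCast fun x : ι → ZMod q => h fun i => y i + x i]
  exact Fintype.expect_equiv (Equiv.addLeft fun i => (y i : ZMod q)) _ _ fun x => rfl

theorem norm_expect_periodic_mul_sub_le {𝕜 : Type*} [RCLike 𝕜] {N q : ℕ} [NeZero N]
    [NeZero q] {h : (ι → ZMod q) → 𝕜} (hh : ∀ x, ‖h x‖ ≤ 1) {f : (ι → ℝ) → 𝕜} (hf : ∀ x, ‖f x‖ ≤ 1)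
    {K : ℝ≥0} (hK : LipschitzOnWith K f (Set.Icc 0 1)) :
    ‖𝔼 y ∈ Icc 1 (N : ι → ℕ), h (fun i => y i) * f (fun i => y i / N) -
      (𝔼 r ∈ Icc 1 (q : ι → ℕ), h (fun i => r i)) * ∫ x in Set.Icc 0 1, f x‖ ≤
      2 * (Fintype.card ι + K) * (q / N) := by
  set G := 𝔼 r ∈ Icc 1 (q : ι → ℕ), h (fun i => r i)
  set riemannSum := 𝔼 y ∈ Icc 1 (N : ι → ℕ), f (fun i => y i / N)
  have norm_G_le : ‖G‖ ≤ 1 :=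
    norm_expect_le_of_norm_le (Icc_one_natCast_nonempty q) fun r _ => hh _
  have oscillation_le : ∀ y ∈ Icc 1 (N : ι → ℕ), ∀ z ∈ Icc 1 (N : ι → ℕ), y ≤ z → z ≤ y + q →
      ‖f (fun i => z i / N) - f (fun i => y i / N)‖ ≤ K * (q / N) := by
    intro y hy z hz y_le_z z_le
    rw [← dist_eq_norm]
    refine (hK.dist_le_mul _ (natCast_div_mem_Icc hz) _ (natCast_div_mem_Icc hy)).trans ?_
    gcongr
    refine (dist_pi_le_iff (by positivity)).2 fun i => ?_
    have lower : (y i : ℝ) ≤ z i := Nat.cast_le.2 (y_le_z i)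
    have upper : (z i : ℝ) ≤ y i + q := by exact_mod_cast z_le i
    rw [Real.dist_eq, ← sub_div, abs_of_nonneg (by have := sub_nonneg.2 lower; positivity)]
    gcongr
    linarith
  have shift_error := norm_expect_mul_sub_mul_expect_le (c := fun y => h fun i => y i)
    (f := fun y => f fun i => y i / N) (fun _ => hh _) (fun _ => hf _)
    (expect_Icc_comp_zmodCast_add h) oscillation_le
  have riemann_error : ‖G * riemannSum - G * ∫ x in Set.Icc 0 1, f x‖ ≤ K * (q / N) := by
    rw [← mul_sub, norm_mul]
    refine (mul_le_of_le_one_left (norm_nonneg _) norm_G_le).trans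
      ((norm_expect_sub_setIntegral_le_of_lipschitzOnWith N hK).trans ?_)
    gcongr
    exact Nat.one_le_cast.2 NeZero.one_le
  refine (norm_sub_le_norm_sub_add_norm_sub _ (G * riemannSum) _).trans
    ((add_le_add shift_error riemann_error).trans_eq (by ring))

end PeriodicWeight

lemma lipschitzWith_fourierChar : LipschitzWith (2 * NNReal.pi) (fun t : ℝ => (𝐞 t : ℂ)) := by
  refine lipschitzWith_of_nnnorm_deriv_le Real.differentiable_fourierChar fun t => ?_
  rw [Real.deriv_fourierChar, ← NNReal.coe_le_coe]
  simp [abs_of_pos Real.pi_pos, Circle.norm_coe]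

lemma lipschitzOnWith_prod_pow {ι 𝕜 : Type*} [Fintype ι] [NontriviallyNormedField 𝕜] (n : ι → ℕ) :
    LipschitzOnWith (∑ i, n i : ℕ) (fun x : ι → 𝕜 => ∏ i, x i ^ n i) (Metric.closedBall 0 1) := by
  let factors (x : ι → 𝕜) (p : Σ i, Fin (n i)) : 𝕜 := x p.1
  have prod_factors (x : ι → 𝕜) :
      ContinuousMultilinearMap.mkPiAlgebra 𝕜 (Σ i, Fin (n i)) 𝕜 (factors x) = ∏ i, x i ^ n i := by
    simp [factors, Fintype.prod_sigma]
  have norm_factors_le (x : ι → 𝕜) : ‖factors x‖ ≤ ‖x‖ :=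
    (pi_norm_le_iff_of_nonneg (norm_nonneg x)).2 fun p => norm_le_pi_norm x p.1
  rw [lipschitzOnWith_iff_norm_sub_le]
  intro x hx y hy
  rw [mem_closedBall_zero_iff] at hx hy
  have max_pow_le : max ‖factors x‖ ‖factors y‖ ^ (Fintype.card (Σ i, Fin (n i)) - 1) ≤ 1 :=
    pow_le_one₀ (by positivity)
      (max_le ((norm_factors_le x).trans hx) ((norm_factors_le y).trans hy))
  rw [← prod_factors x, ← prod_factors y]
  calc _ ≤ ‖ContinuousMultilinearMap.mkPiAlgebra 𝕜 (Σ i, Fin (n i)) 𝕜‖ *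
          Fintype.card (Σ i, Fin (n i)) *
          max ‖factors x‖ ‖factors y‖ ^ (Fintype.card (Σ i, Fin (n i)) - 1) *
          ‖factors x - factors y‖ := ContinuousMultilinearMap.norm_image_sub_le _ _ _
    _ ≤ 1 * (∑ i, n i : ℕ) * 1 * ‖x - y‖ := by
        gcongr
        · exact ContinuousMultilinearMap.norm_mkPiAlgebra.le
        · simp
        · exact norm_factors_le (x - y)
    _ = ((∑ i, n i : ℕ) : ℝ≥0) * ‖x - y‖ := by simp

section PolynomialPhase

variable {k N₀ : ℕ}

/-- The polynomial phase `θ · Q(x) = ∑ γ, θ_γ x^γ`. -/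
def phase (θ : Gam k N₀ → ℝ) (x : Fin k → ℝ) : ℝ :=
  ∑ γ : Gam k N₀, θ γ * ∏ i, x i ^ (γ.1 i : ℕ)

/-- The order `|γ| = γ₁ + ⋯ + γ_k` of a multi-index. -/
def multiDegree (γ : Gam k N₀) : ℕ := ∑ i, (γ.1 i : ℕ)

lemma multiDegree_le (γ : Gam k N₀) : multiDegree γ ≤ k * N₀ := by
  simpa [multiDegree] using
    sum_le_card_nsmul univ (fun i => (γ.1 i : ℕ)) N₀ fun i _ => (γ.1 i).is_le

lemma phase_add (θ η : Gam k N₀ → ℝ) (x : Fin k → ℝ) :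
    phase (θ + η) x = phase θ x + phase η x := by
  simp only [phase, Pi.add_apply, add_mul, sum_add_distrib]

lemma phase_smul (θ : Gam k N₀ → ℝ) (t : ℝ) (x : Fin k → ℝ) :
    phase θ (t • x) = phase (fun γ => θ γ * t ^ multiDegree γ) x := by
  simp only [phase, multiDegree, Pi.smul_apply, smul_eq_mul, mul_pow, prod_mul_distrib,
    prod_pow_eq_pow_sum, mul_assoc]

lemma lipschitzOnWith_phase (θ : Gam k N₀ → ℝ) :
    LipschitzOnWith (k * N₀ * ∑ γ, ‖θ γ‖₊) (phase θ) (Metric.closedBall 0 1) := by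
  rw [lipschitzOnWith_iff_norm_sub_le]
  intro x hx y hy
  have norm_monomial_sub_le (γ : Gam k N₀) :
      ‖∏ i, x i ^ (γ.1 i : ℕ) - ∏ i, y i ^ (γ.1 i : ℕ)‖ ≤ k * N₀ * ‖x - y‖ := by
    refine ((lipschitzOnWith_prod_pow fun i => (γ.1 i : ℕ)).norm_sub_le hx hy).trans ?_
    gcongr
    exact_mod_cast multiDegree_le γ
  simp only [phase]
  rw [← sum_sub_distrib]
  simp only [← mul_sub]
  refine (norm_sum_le_of_le _ fun γ _ => (norm_mul_le _ _).trans
    (mul_le_mul_of_nonneg_left (norm_monomial_sub_le γ) (norm_nonneg _))).trans_eq ?_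
  rw [← sum_mul]
  push_cast
  ring

lemma lipschitzOnWith_fourierChar_phase (θ : Gam k N₀ → ℝ) :
    LipschitzOnWith (2 * NNReal.pi * (k * N₀ * ∑ γ, ‖θ γ‖₊)) (fun x => (𝐞 (phase θ x) : ℂ))
      (Set.Icc 0 1) := by
  refine lipschitzWith_fourierChar.comp_lipschitzOnWith ((lipschitzOnWith_phase θ).mono ?_)
  intro x hx
  rw [mem_closedBall_zero_iff, pi_norm_le_iff_of_nonneg zero_le_one]
  exact fun i => abs_le.2 ⟨by linarith [show 0 ≤ x i from hx.1 i], hx.2 i⟩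

/-- The reduction modulo `q` of the phase character `e((a/q) · Q(r))`. -/
def residueChar {q : ℕ} [NeZero q] (a : Gam k N₀ → ℕ) (x : Fin k → ZMod q) : ℂ :=
  ZMod.stdAddChar (∑ γ : Gam k N₀, (a γ : ZMod q) * ∏ i, x i ^ (γ.1 i : ℕ))

lemma norm_residueChar {q : ℕ} [NeZero q] (a : Gam k N₀ → ℕ) (x : Fin k → ZMod q) :
    ‖residueChar a x‖ = 1 := by
  simp [residueChar]

lemma exp_two_pi_I_mul_eq_fourierChar (t : ℝ) :
    Complex.exp (2 * Real.pi * Complex.I * t) = 𝐞 t := by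
  rw [Real.fourierChar_apply]
  push_cast
  ring_nf

lemma fourierChar_phase_natCast (q : ℕ) [NeZero q] (a : Gam k N₀ → ℕ) (r : Fin k → ℕ) :
    (𝐞 (phase (fun γ => (a γ : ℝ) / q) fun i => r i) : ℂ) =
      residueChar a fun i => (r i : ZMod q) := by
  have residue_eq_intCast :
      (∑ γ : Gam k N₀, (a γ : ZMod q) * ∏ i, (r i : ZMod q) ^ (γ.1 i : ℕ)) =
        ((∑ γ : Gam k N₀, (a γ : ℤ) * ∏ i, (r i : ℤ) ^ (γ.1 i : ℕ) : ℤ) : ZMod q) := by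
    push_cast; rfl
  have phase_eq_div : phase (fun γ => (a γ : ℝ) / q) (fun i => (r i : ℝ)) =
      ((∑ γ : Gam k N₀, (a γ : ℤ) * ∏ i, (r i : ℤ) ^ (γ.1 i : ℕ) : ℤ) : ℝ) / q := by
    push_cast
    simp only [phase, sum_div, div_mul_eq_mul_div]
  rw [residueChar, residue_eq_intCast, ZMod.stdAddChar_coe, phase_eq_div,
    ← exp_two_pi_I_mul_eq_fourierChar, mul_div_assoc]
  push_cast
  rfl

lemma mAvg_eq_expect (N : ℕ) (ξ : Gam k N₀ → ℝ) :
    mAvg k N₀ N ξ = 𝔼 y ∈ Icc 1 (N : Fin k → ℕ), (𝐞 (phase ξ fun i => y i) : ℂ) := by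
  simp only [expect_Icc_one_natCast, Fintype.card_fin, ← exp_two_pi_I_mul_eq_fourierChar]
  rfl

lemma gaussSumCan_eq_expect (q : ℕ) [NeZero q] (a : Gam k N₀ → ℕ) :
    gaussSumCan k N₀ q a =
      𝔼 r ∈ Icc 1 (q : Fin k → ℕ), residueChar a fun i => (r i : ZMod q) := by
  simp only [expect_Icc_one_natCast, Fintype.card_fin, ← fourierChar_phase_natCast,
    ← exp_two_pi_I_mul_eq_fourierChar]
  rfl

lemma PhiAvg_eq_setIntegral (N : ℕ) (θ : Gam k N₀ → ℝ) :
    PhiAvg k N₀ N θ =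
      ∫ x in Set.Icc 0 1, (𝐞 (phase (fun γ => θ γ * N ^ multiDegree γ) x) : ℂ) := by
  have cube_eq : {y : Fin k → ℝ | ∀ i, y i ∈ Set.Icc (0 : ℝ) 1} = Set.Icc 0 1 := by
    ext y; simp [Pi.le_def, forall_and]
  rw [PhiAvg, cube_eq]
  simp only [← phase_smul, ← exp_two_pi_I_mul_eq_fourierChar]
  rfl

end PolynomialPhase

section Approximation

variable {k N₀ : ℕ}

lemma fourierChar_phase_eq_mul (N q : ℕ) [NeZero N] [NeZero q] (a : Gam k N₀ → ℕ)
    (ξ : Gam k N₀ → ℝ) (y : Fin k → ℕ) :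
    (𝐞 (phase ξ fun i => y i) : ℂ) = residueChar a (fun i => (y i : ZMod q)) *
      𝐞 (phase (fun γ => (ξ γ - a γ / q) * N ^ multiDegree γ) fun i => y i / N) := by
  have rescale : (N : ℝ) • (fun i => (y i : ℝ) / N) = fun i => (y i : ℝ) := by
    funext i
    exact mul_div_cancel₀ _ (NeZero.ne _)
  have split : ξ = (fun γ => (a γ : ℝ) / q) + fun γ => ξ γ - a γ / q := by
    funext γ
    simp
  rw [← phase_smul, rescale, ← fourierChar_phase_natCast, ← Circle.coe_mul,
    ← AddChar.map_add_eq_mul, ← phase_add, ← split]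

theorem norm_mAvg_sub_gaussSumCan_mul_PhiAvg_le (N q : ℕ) [NeZero N] [NeZero q]
    (a : Gam k N₀ → ℕ) (ξ : Gam k N₀ → ℝ) :
    ‖mAvg k N₀ N ξ - gaussSumCan k N₀ q a * PhiAvg k N₀ N (fun γ => ξ γ - (a γ : ℝ) / q)‖ ≤
      (2 * k + 4 * Real.pi * (k * N₀) * ∑ γ, |ξ γ - a γ / q| * N ^ multiDegree γ) * (q / N) := by
  rw [mAvg_eq_expect, gaussSumCan_eq_expect, PhiAvg_eq_setIntegral]
  simp only [fourierChar_phase_eq_mul N q a ξ]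
  refine (norm_expect_periodic_mul_sub_le (fun x => (norm_residueChar a x).le)
    (fun x => (Circle.norm_coe _).le) (lipschitzOnWith_fourierChar_phase _)).trans_eq ?_
  simp only [Fintype.card_fin, NNReal.coe_mul, NNReal.coe_sum, NNReal.coe_natCast, coe_nnnorm,
    NNReal.coe_real_pi, NNReal.coe_ofNat, norm_mul, norm_pow, Real.norm_eq_abs, Nat.abs_cast]
  ring

lemma sum_abs_mul_pow_le {N : ℕ} {L₁ L₂ : ℝ} {θ : Gam k N₀ → ℝ}
    (hθ : ∀ γ, |θ γ| ≤ L₂ / L₁ ^ multiDegree γ) :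
    ∑ γ, |θ γ| * (N : ℝ) ^ multiDegree γ ≤
      L₂ * ∑ γ : Gam k N₀, ((N : ℝ) / L₁) ^ multiDegree γ := by
  rw [mul_sum]
  refine sum_le_sum fun γ _ => ?_
  refine (mul_le_mul_of_nonneg_right (hθ γ) (by positivity)).trans_eq ?_
  rw [div_pow]
  ring

lemma sum_div_pow_multiDegree_le_card {N : ℕ} {L₁ : ℝ} (hL₁ : (N : ℝ) ≤ L₁) :
    ∑ γ : Gam k N₀, ((N : ℝ) / L₁) ^ multiDegree γ ≤ Fintype.card (Gam k N₀) := by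
  have L₁_nonneg : 0 ≤ L₁ := N.cast_nonneg.trans hL₁
  simpa using sum_le_card_nsmul univ (fun γ : Gam k N₀ => ((N : ℝ) / L₁) ^ multiDegree γ) 1
    fun γ _ => pow_le_one₀ (by positivity) (div_le_one_of_le₀ hL₁ L₁_nonneg)

lemma norm_mAvg_sub_gaussSumCan_mul_PhiAvg_le_of_abs_le {N q : ℕ} [NeZero N] [NeZero q]
    {L₁ L₂ L₃ : ℝ} (hqL₃ : (q : ℝ) ≤ L₃) {a : Gam k N₀ → ℕ} {ξ : Gam k N₀ → ℝ}
    (hξ : ∀ γ, |ξ γ - (a γ : ℝ) / q| ≤ L₂ / L₁ ^ multiDegree γ) :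
    ‖mAvg k N₀ N ξ - gaussSumCan k N₀ q a * PhiAvg k N₀ N (fun γ => ξ γ - (a γ : ℝ) / q)‖ ≤
      (2 * k + 4 * Real.pi * (k * N₀)) *
        (L₃ / N + L₂ * L₃ / N * ∑ γ : Gam k N₀, ((N : ℝ) / L₁) ^ multiDegree γ) := by
  set S := ∑ γ, |ξ γ - a γ / q| * (N : ℝ) ^ multiDegree γ
  set σ := ∑ γ : Gam k N₀, ((N : ℝ) / L₁) ^ multiDegree γ
  have S_nonneg : 0 ≤ S := sum_nonneg fun γ _ => by positivity
  have S_le : S ≤ L₂ * σ := sum_abs_mul_pow_le hξ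
  calc ‖mAvg k N₀ N ξ - gaussSumCan k N₀ q a * PhiAvg k N₀ N (fun γ => ξ γ - (a γ : ℝ) / q)‖
      ≤ (2 * k + 4 * Real.pi * (k * N₀) * S) * (q / N) :=
        norm_mAvg_sub_gaussSumCan_mul_PhiAvg_le N q a ξ
    _ ≤ (2 * k + 4 * Real.pi * (k * N₀)) * (1 + S) * (q / N) := by
        gcongr
        have : 0 ≤ 2 * k * S := by positivity
        have : 0 ≤ 4 * Real.pi * (k * N₀) := by positivity
        linarith
    _ ≤ (2 * k + 4 * Real.pi * (k * N₀)) * (1 + L₂ * σ) * (L₃ / N) := by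
        have : 0 ≤ 1 + L₂ * σ := by linarith
        gcongr
    _ = (2 * k + 4 * Real.pi * (k * N₀)) * (L₃ / N + L₂ * L₃ / N * σ) := by ring

theorem statement16_general (k N₀ : ℕ) :
    ∃ C : ℝ, 0 < C ∧
      ∀ N : ℕ, 1 ≤ N → ∀ L₁ L₂ L₃ : ℝ, (N : ℝ) ≤ L₁ → 1 ≤ L₂ →
      ∀ q : ℕ, 1 ≤ q → (q : ℝ) ≤ L₃ →
      ∀ a : Gam k N₀ → ℕ, ∀ ξ : Gam k N₀ → ℝ,
        (∀ γ : Gam k N₀, |ξ γ - (a γ : ℝ) / q| ≤ L₂ / L₁ ^ multiDegree γ) →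
        ‖mAvg k N₀ N ξ - gaussSumCan k N₀ q a * PhiAvg k N₀ N (fun γ => ξ γ - (a γ : ℝ) / q)‖
            ≤ C * (L₃ / N + L₂ * L₃ / N * ∑ γ : Gam k N₀, ((N : ℝ) / L₁) ^ multiDegree γ) ∧
        ‖mAvg k N₀ N ξ - gaussSumCan k N₀ q a * PhiAvg k N₀ N (fun γ => ξ γ - (a γ : ℝ) / q)‖
            ≤ C * (L₂ * L₃ / N) := by
  set K : ℝ := 2 * k + 4 * Real.pi * (k * N₀)
  set d : ℝ := (Fintype.card (Gam k N₀) : ℝ)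
  have : 0 ≤ K := by positivity
  have d_nonneg : 0 ≤ d := Nat.cast_nonneg _
  refine ⟨(K + 1) * (1 + d), by positivity, fun N hN L₁ L₂ L₃ hL₁ hL₂ q hq hqL₃ a ξ hξ => ?_⟩
  have : NeZero N := ⟨by omega⟩
  have : NeZero q := ⟨by omega⟩
  set σ := ∑ γ : Gam k N₀, ((N : ℝ) / L₁) ^ multiDegree γ
  have L₁_nonneg : 0 ≤ L₁ := N.cast_nonneg.trans hL₁
  have L₃_nonneg : 0 ≤ L₃ := q.cast_nonneg.trans hqL₃
  have : 0 ≤ σ := sum_nonneg fun γ _ => by positivity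
  have bound := norm_mAvg_sub_gaussSumCan_mul_PhiAvg_le_of_abs_le (N := N) hqL₃ hξ
  constructor
  · refine bound.trans (mul_le_mul_of_nonneg_right ?_ (by positivity))
    exact (le_add_of_nonneg_right zero_le_one).trans
      (le_mul_of_one_le_right (by positivity) (le_add_of_nonneg_right d_nonneg))
  · have main_term_le : L₃ / N + L₂ * L₃ / N * σ ≤ (1 + d) * (L₂ * L₃ / N) :=
      calc L₃ / N + L₂ * L₃ / N * σ ≤ L₂ * L₃ / N + L₂ * L₃ / N * d := by
            gcongr
            · exact le_mul_of_one_le_left L₃_nonneg hL₂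
            · exact sum_div_pow_multiDegree_le_card hL₁
        _ = (1 + d) * (L₂ * L₃ / N) := by ring
    calc _ ≤ K * (L₃ / N + L₂ * L₃ / N * σ) := bound
      _ ≤ (K + 1) * ((1 + d) * (L₂ * L₃ / N)) := by gcongr; linarith
      _ = (K + 1) * (1 + d) * (L₂ * L₃ / N) := by ring

end Approximation

/-- **Proposition 4.1 (Gaussian-sum approximation of the averaging multiplier).** -/
theorem statement16 (k N₀ : ℕ) (hk : 1 ≤ k) (hN₀ : 1 ≤ N₀) :
    ∃ C : ℝ, 0 < C ∧
      ∀ N : ℕ, 1 ≤ N → ∀ L₁ L₂ L₃ : ℝ, (N : ℝ) ≤ L₁ → 1 ≤ L₂ → L₃ ≤ Real.sqrt N →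
      ∀ q : ℕ, 1 ≤ q → (q : ℝ) ≤ L₃ →
      ∀ a : Gam k N₀ → ℕ, (∀ γ, 1 ≤ a γ ∧ a γ ≤ q) →
        Nat.gcd q (Finset.univ.gcd a) = 1 →
      ∀ ξ : Gam k N₀ → ℝ, (∀ γ, -(1 / 2) ≤ ξ γ ∧ ξ γ < 1 / 2) →
        (∀ γ : Gam k N₀,
          |ξ γ - (a γ : ℝ) / q| ≤
            L₂ / L₁ ^ (∑ i, ((γ : Fin k → Fin (N₀ + 1)) i : ℕ))) →
        ‖mAvg k N₀ N ξ - gaussSumCan k N₀ q a * PhiAvg k N₀ N (fun γ => ξ γ - (a γ : ℝ) / q)‖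
            ≤ C * (L₃ / N + L₂ * L₃ / N *
              ∑ γ : Gam k N₀, ((N : ℝ) / L₁) ^ (∑ i, ((γ : Fin k → Fin (N₀ + 1)) i : ℕ))) ∧
        ‖mAvg k N₀ N ξ - gaussSumCan k N₀ q a * PhiAvg k N₀ N (fun γ => ξ γ - (a γ : ℝ) / q)‖
            ≤ C * (L₂ * L₃ / N) := by
  obtain ⟨C, hC, bound⟩ := statement16_general k N₀
  exact ⟨C, hC, fun N hN L₁ L₂ L₃ hL₁ hL₂ _ q hq hqL₃ a _ _ ξ _ hξ =>
    bound N hN L₁ L₂ L₃ hL₁ hL₂ q hq hqL₃ a ξ hξ⟩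

end
end
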